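/- For every natural number n ≥ 0, u₂ⁿ · B[n+1,0,0,n] · u₁^{n+1} = Σ_{(k,l)} q^{f(n,k,l)} [n−k; l][n+1−l; k] p₁^{n+1−k} u₂^{2k} u₁^{2l} p₀^{n−l}, where the sum runs over all pairs (k,l) ∈ ℕ² with k + l ≤ n or (k,l) = (n+1,0), and f(n,k,l) = n(n−2) + k(n+2) + l(n+1) − 2kl. -/

import Mathlib

noncomputable section

abbrev F : Type := RatFunc ℚ

/-- The deformation parameter `q`. -/
def qq : F := RatFunc.X

/-- The quantum integer `[3] = q² + 1 + q⁻²`. -/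
def box3 : F := qq ^ 2 + 1 + (qq⁻¹) ^ 2

/-- The generators `E₁, E₂` of the free algebra. -/
def gen (i : Fin 2) : FreeAlgebra F (Fin 2) := FreeAlgebra.ι F i

/-- The quantized Serre relations. -/
inductive SerreRel : FreeAlgebra F (Fin 2) → FreeAlgebra F (Fin 2) → Prop
  | rel1 : SerreRel
      (gen 0 ^ 3 * gen 1 - box3 • (gen 0 ^ 2 * gen 1 * gen 0)
        + box3 • (gen 0 * gen 1 * gen 0 ^ 2) - gen 1 * gen 0 ^ 3) 0
  | rel2 : SerreRel
      (gen 1 ^ 3 * gen 0 - box3 • (gen 1 ^ 2 * gen 0 * gen 1)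
        + box3 • (gen 1 * gen 0 * gen 1 ^ 2) - gen 0 * gen 1 ^ 3) 0

/-- `U = U_q(𝔫)`, the free algebra on `E₁, E₂` modulo the quantized Serre relations. -/
abbrev U : Type := RingQuot SerreRel

def E1 : U := RingQuot.mkAlgHom F SerreRel (gen 0)
def E2 : U := RingQuot.mkAlgHom F SerreRel (gen 1)

/-- `A = (1/(q+q⁻¹))(E₂E₁ − q⁻²E₁E₂)`. -/
def Aelt : U := (qq + qq⁻¹)⁻¹ • (E2 * E1 - (qq⁻¹) ^ 2 • (E1 * E2))

def v0 : U := E1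
def v1 : U := Aelt * v0 - v0 * Aelt
def v2 : U := Aelt * v1 - v1 * Aelt
def v3 : U := Aelt * v2 - v2 * Aelt

/-- `uᵢ = (1 − q⁻²)⁻²ⁱ vᵢ`. -/
def u0 : U := v0
def u1 : U := ((1 - (qq⁻¹) ^ 2)⁻¹) ^ 2 • v1
def u2 : U := ((1 - (qq⁻¹) ^ 2)⁻¹) ^ 4 • v2
def u3 : U := ((1 - (qq⁻¹) ^ 2)⁻¹) ^ 6 • v3

/-- `p₁ = u₃u₁ − q²u₂²`. -/
def p1 : U := u3 * u1 - qq ^ 2 • u2 ^ 2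
/-- `p₀ = u₂u₀ − q²u₁²`. -/
def p0 : U := u2 * u0 - qq ^ 2 • u1 ^ 2

/-- `S`, the subalgebra of `U` generated by `u₀, u₁, u₂, u₃`. -/
abbrev Sgen : Subalgebra F U := Algebra.adjoin F ({u0, u1, u2, u3} : Set U)

def us0 : Sgen := ⟨u0, Algebra.subset_adjoin (by simp)⟩
def us1 : Sgen := ⟨u1, Algebra.subset_adjoin (by simp)⟩
def us2 : Sgen := ⟨u2, Algebra.subset_adjoin (by simp)⟩
def us3 : Sgen := ⟨u3, Algebra.subset_adjoin (by simp)⟩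

/-- `p₁ = u₃u₁ − q²u₂²` as an element of `S`. -/
def ps1 : Sgen := us3 * us1 - qq ^ 2 • us2 ^ 2
/-- `p₀ = u₂u₀ − q²u₁²` as an element of `S`. -/
def ps0 : Sgen := us2 * us0 - qq ^ 2 • us1 ^ 2

/-- Index quadruples `a = (a₃, a₂, a₁, a₀)`. -/
abbrev Idx : Type := ℕ × ℕ × ℕ × ℕ

/-- The PBW monomial `u₃^{a₃}u₂^{a₂}u₁^{a₁}u₀^{a₀}`. -/
def mon (a : Idx) : Sgen := us3 ^ a.1 * us2 ^ a.2.1 * us1 ^ a.2.2.1 * us0 ^ a.2.2.2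

/-- `b(a) = C(a₃,2)+C(a₂,2)+C(a₁,2)+C(a₀,2)`. -/
def bexp (a : Idx) : ℕ :=
  Nat.choose a.1 2 + Nat.choose a.2.1 2 + Nat.choose a.2.2.1 2 + Nat.choose a.2.2.2 2

/-- The dual PBW basis element `E[a] = q^{b(a)} u₃^{a₃}u₂^{a₂}u₁^{a₁}u₀^{a₀}`. -/
def Ee (a : Idx) : Sgen := qq ^ bexp a • mon a

/-- `N(a) = (a₃+a₂+a₁+a₀)² − 7a₃ − 5a₂ − 3a₁ − a₀`. -/
def Nnum (a : Idx) : ℤ :=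
  ((a.1 : ℤ) + a.2.1 + a.2.2.1 + a.2.2.2) ^ 2
    - 7 * a.1 - 5 * a.2.1 - 3 * a.2.2.1 - a.2.2.2

/-- `a ⊴ b` iff `b − a ∈ ℕ·(−1,2,−1,0) + ℕ·(0,−1,2,−1)`. -/
def tri (a b : Idx) : Prop :=
  ∃ s r : ℕ,
    (b.1 : ℤ) = a.1 - s ∧
    (b.2.1 : ℤ) = a.2.1 + 2 * s - r ∧
    (b.2.2.1 : ℤ) = a.2.2.1 - s + 2 * r ∧
    (b.2.2.2 : ℤ) = a.2.2.2 - r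

/-- `S(a) = {b ∈ ℕ⁴ : a ⊴ b and a ≠ b}`. -/
def Sset (a : Idx) : Set Idx := {b | tri a b ∧ a ≠ b}

/-- Condition (i): `B[a] − E[a] ∈ Σ_{b ∈ S(a)} qℤ[q]·E[b]`. -/
def cond1 (B : Idx → Sgen) (a : Idx) : Prop :=
  ∃ φ : Idx →₀ Polynomial ℤ,
    (↑φ.support : Set Idx) ⊆ Sset a ∧
    B a - Ee a =
      φ.sum fun b p => (qq * Polynomial.eval₂ (Int.castRingHom F) qq p) • Ee b

/-- Hypotheses on the bar involution of coefficients `bar : q ↦ q⁻¹` and on the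
anti-automorphism `σ` of `S`: `σ` is an additive, anti-multiplicative bijection with
`σ(c(q)·x) = c(q⁻¹)·σ(x)` and `σ(uᵢ) = q^{2i}uᵢ`. -/
def SigmaHyp (bar : F →+* F) (σ : Sgen → Sgen) : Prop :=
  bar qq = qq⁻¹ ∧
  Function.Bijective σ ∧
  (∀ x y : Sgen, σ (x + y) = σ x + σ y) ∧
  (∀ x y : Sgen, σ (x * y) = σ y * σ x) ∧
  (∀ (c : F) (x : Sgen), σ (c • x) = bar c • σ x) ∧
  σ us0 = us0 ∧ σ us1 = qq ^ 2 • us1 ∧ σ us2 = qq ^ 4 • us2 ∧ σ us3 = qq ^ 6 • us3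

/-- The defining properties of the dual canonical basis `B`: for every `a ∈ ℕ⁴`,
`B[a] − E[a] ∈ Σ_{b ∈ S(a)} qℤ[q]·E[b]` and `σ(B[a]) = q^{−N(a)}B[a]`. -/
def DCB (bar : F →+* F) (σ : Sgen → Sgen) (B : Idx → Sgen) : Prop :=
  ∀ a : Idx, cond1 B a ∧ σ (B a) = qq ^ (-Nnum a) • B a

/-- Extension of `B` to integer quadruples by the convention that `B[a] = 0` whenever
some coordinate of `a` is negative. -/
def Bz (B : Idx → Sgen) (a : ℤ × ℤ × ℤ × ℤ) : Sgen :=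
  if 0 ≤ a.1 ∧ 0 ≤ a.2.1 ∧ 0 ≤ a.2.2.1 ∧ 0 ≤ a.2.2.2 then
    B (a.1.toNat, a.2.1.toNat, a.2.2.1.toNat, a.2.2.2.toNat)
  else 0

/-- The quantum integer `[m] = (q^m − q^{−m})/(q − q⁻¹)`. -/
def qint (m : ℤ) : F := (qq ^ m - qq ^ (-m)) / (qq - qq⁻¹)

/-- The quantized factorial `[i]! = [i][i−1]⋯[1]`. -/
def qfact (i : ℕ) : F := ∏ j ∈ Finset.range i, qint ((j : ℤ) + 1)

/-- The quantum binomial coefficient `[m; i] = [m][m−1]⋯[m−i+1]/[i]!`. -/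
def qbinom (m : ℤ) (i : ℕ) : F := (∏ j ∈ Finset.range i, qint (m - j)) / qfact i

/-- `f(n,k,l) = n(n−2) + k(n+2) + l(n+1) − 2kl`. -/
def fexp (n k l : ℕ) : ℤ :=
  (n : ℤ) * ((n : ℤ) - 2) + (k : ℤ) * ((n : ℤ) + 2) + (l : ℤ) * ((n : ℤ) + 1)
    - 2 * (k : ℤ) * (l : ℤ)

/-!
The Serre relations yield an element `ψ` commuting with `A` whose bracket with `E₁` is prescribed;
bracketing with `A` and `ψ` then gives all the straightening relations among `u₀, u₁, u₂, u₃`. They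
imply that `p₁, u₂, u₁, p₀` commute up to powers of `q`, so the double sum of the theorem (and its
analogue with `p₁ⁿ` in place of `p₁ⁿ⁺¹`) lives in a quantum torus, where the two `q`-Pascal rules
give it a recursion. Elements defined by the matching recursion, alternately multiplying by `u₃` on
the left and by `u₀` on the right, become these sums after multiplication by `u₂ⁿ` on the left and
by a power of `u₁` on the right. The anti-isomorphism `uᵢ ↦ u₃₋ᵢ` to the opposite algebra exchanges
the two kinds of recursion step.

It remains to see that these elements are dual canonical. The recursion keeps them in
`E[a] + ∑ qℤ[q] E[b]`. Quantum binomials are invariant under `q ↦ q⁻¹`, so `σ` multiplies each term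
of the sum by a power of `q`; multiplication by `u₂ⁿ` and `u₁ᵐ` being injective by the PBW theorem,
the elements are eigenvectors of `σ` with eigenvalue `q^{-N(a)}`. Lusztig's argument, that no
nonzero element of `qℤ[q]` is fixed by `q ↦ q⁻¹`, identifies them with `B[n+1,0,0,n]`.
-/

/-! ### Straightening relations from the Serre relations -/

section SerreRelations

variable {K R : Type*} [Field K] [Ring R] [Algebra K R] {t b : K} {e f A ψ x y z z' : R}

attribute [local instance] LieRing.ofAssociativeRing

theorem lie_smul_right (c : K) (x y : R) : ⁅x, c • y⁆ = c • ⁅x, y⁆ := by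
  rw [Ring.lie_def, mul_smul_comm, smul_mul_assoc, ← smul_sub, Ring.lie_def]

theorem lie_mul_leibniz (x y z : R) : ⁅x, y * z⁆ = ⁅x, y⁆ * z + y * ⁅x, z⁆ := by
  simp only [Ring.lie_def, mul_sub, sub_mul, mul_assoc]
  abel

theorem qCommutator_lie_eq (hfe : f * e = t • (e * f) + b • A) :
    f * ⁅A, e⁆ - t • (⁅A, e⁆ * f) = t • (e * ⁅A, f⁆) - ⁅A, f⁆ * e := by
  have bracket_hfe : ⁅A, f * e⁆ = t • ⁅A, e * f⁆ := by
    rw [hfe, lie_add, lie_smul_right, lie_smul_right, lie_self, smul_zero, add_zero]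
  simp only [Ring.lie_def, mul_sub, sub_mul, smul_sub, mul_assoc] at bracket_hfe ⊢
  linear_combination (norm := module) bracket_hfe

theorem smul_lie_qCommutator_left (hfe : f * e = t • (e * f) + b • A)
    (hy : e * y = t • (y * e)) (hψ : f * y - t • (y * f) = ψ) :
    t • ⁅ψ, e⁆ = b • (A * y - t ^ 2 • (y * A)) := by
  have fey : f * (e * y) = t • (e * (f * y)) + b • (A * y) := by
    rw [← mul_assoc, hfe]; simp only [add_mul, smul_mul_assoc, mul_assoc]
  have yfe : y * (f * e) = t • (y * (e * f)) + b • (y * A) := by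
    rw [hfe]; simp only [mul_add, mul_smul_comm]
  have eyf : e * (y * f) = t • (y * (e * f)) := by
    rw [← mul_assoc, hy, smul_mul_assoc, mul_assoc]
  rw [hy, mul_smul_comm] at fey
  subst hψ
  simp only [Ring.lie_def, mul_sub, sub_mul, smul_sub, mul_assoc, mul_smul_comm, smul_mul_assoc]
  linear_combination (norm := module) fey - t ^ 2 • yfe + t ^ 2 • eyf

theorem smul_lie_qCommutator_right (hfe : f * e = t • (e * f) + b • A)
    (hy : t • (f * y) = y * f) (hψ : t • (e * y) - y * e = ψ) :
    t • ⁅ψ, f⁆ = b • (y * A - t ^ 2 • (A * y)) := by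
  have fey : f * (e * y) = t • (e * (f * y)) + b • (A * y) := by
    rw [← mul_assoc, hfe]; simp only [add_mul, smul_mul_assoc, mul_assoc]
  have yfe : y * (f * e) = t • (y * (e * f)) + b • (y * A) := by
    rw [hfe]; simp only [mul_add, mul_smul_comm]
  have fye : t • (f * (y * e)) = y * (f * e) := by
    rw [← mul_assoc, ← smul_mul_assoc, hy, mul_assoc]
  have efy : t • (e * (f * y)) = e * (y * f) := by rw [← mul_smul_comm, hy]
  subst hψ
  simp only [Ring.lie_def, mul_sub, sub_mul, smul_sub, mul_assoc, mul_smul_comm, smul_mul_assoc]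
  linear_combination (norm := module) fye - t ^ 2 • efy - t ^ 2 • fey + yfe

theorem qCommutator_mul_eq_mul (hb : b ≠ 0) (h3 : 1 + t + t ^ 2 ≠ 0)
    (hfe : f * e = t • (e * f) + b • A) (hy : ⁅A, e⁆ = y) (hz : ⁅A, f⁆ = z)
    (hψ : f * y - t • (y * f) = ψ) (hψ' : t • (e * z) - z * e = ψ)
    (hψe : t • ⁅ψ, e⁆ = b • (A * y - t ^ 2 • (y * A)))
    (hψf : t • ⁅ψ, f⁆ = b • (z * A - t ^ 2 • (A * z))) : ψ * A = A * ψ := by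
  have smul_lie : t • ⁅ψ, A⁆ = (z * A - t ^ 2 • (A * z)) * e + f * (A * y - t ^ 2 • (y * A))
      - t • ((A * y - t ^ 2 • (y * A)) * f) - t • (e * (z * A - t ^ 2 • (A * z))) := by
    apply smul_right_injective R hb
    have hbA : b • A = f * e - t • (e * f) := by rw [hfe]; abel
    have leibniz : t • ⁅ψ, b • A⁆ = t • ⁅ψ, f⁆ * e + f * (t • ⁅ψ, e⁆)
        - t • (t • ⁅ψ, e⁆ * f) - t • (e * (t • ⁅ψ, f⁆)) := by
      rw [hbA]
      simp only [Ring.lie_def, mul_sub, sub_mul, smul_sub, mul_assoc, mul_smul_comm,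
        smul_mul_assoc]
      module
    rw [hψe, hψf, lie_smul_right] at leibniz
    simp only [smul_mul_assoc, mul_smul_comm] at leibniz ⊢
    linear_combination (norm := module) leibniz
  have hAψ : A * ψ = A * (f * y - t • (y * f)) := by rw [hψ]
  have hAψ' : A * ψ = A * (t • (e * z) - z * e) := by rw [hψ']
  have hψA : ψ * A = (f * y - t • (y * f)) * A := by rw [hψ]
  have hψA' : ψ * A = (t • (e * z) - z * e) * A := by rw [hψ']
  have vanish : (1 + t + t ^ 2) • (ψ * A - A * ψ) = 0 := by
    subst hy hz
    simp only [Ring.lie_def, mul_sub, sub_mul, smul_sub, mul_assoc, mul_smul_comm,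
      smul_mul_assoc] at smul_lie hAψ hAψ' hψA hψA' ⊢
    linear_combination (norm := module)
      smul_lie - hAψ - t ^ 2 • hAψ' + t ^ 2 • hψA + hψA'
  exact sub_eq_zero.mp ((smul_eq_zero.mp vanish).resolve_left h3)

theorem exists_commute_smul_lie_eq (hb : b ≠ 0) (h3 : 1 + t + t ^ 2 ≠ 0)
    (hfe : f * e = t • (e * f) + b • A) (he : e * ⁅A, e⁆ = t • (⁅A, e⁆ * e))
    (hf : t • (f * ⁅A, f⁆) = ⁅A, f⁆ * f) :
    ∃ ψ : R, ψ * A = A * ψ ∧ t • ⁅ψ, e⁆ = b • (A * ⁅A, e⁆ - t ^ 2 • (⁅A, e⁆ * A)) := by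
  have hψe := smul_lie_qCommutator_left hfe he rfl
  have hψf := smul_lie_qCommutator_right hfe hf (qCommutator_lie_eq hfe).symm
  exact ⟨_, qCommutator_mul_eq_mul hb h3 hfe rfl rfl rfl (qCommutator_lie_eq hfe).symm hψe hψf,
    hψe⟩

theorem smul_lie_lie_eq (hψA : ψ * A = A * ψ) (hy : ⁅A, x⁆ = y) (hz : ⁅A, y⁆ = z)
    (hψx : t • ⁅ψ, x⁆ = b • (A * y - t ^ 2 • (y * A))) :
    t • ⁅ψ, y⁆ = b • (A * z - t ^ 2 • (z * A)) := by
  have lie_comm : ⁅ψ, ⁅A, x⁆⁆ = ⁅A, ⁅ψ, x⁆⁆ := by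
    rw [leibniz_lie, Ring.lie_def ψ A, hψA, sub_self, zero_lie, zero_add]
  rw [← hy, lie_comm, ← lie_smul_right, hψx, ← hz]
  simp only [Ring.lie_def, mul_sub, sub_mul, smul_sub, mul_assoc, mul_smul_comm, smul_mul_assoc]
  module

theorem mul_lie_lie_eq (hy : ⁅A, x⁆ = y) (hz : ⁅A, y⁆ = z) (hxy : x * y = t • (y * x)) :
    x * z = t • (z * x) + (t - 1) • (y * y) := by
  have bracket : ⁅A, x * y⁆ = t • ⁅A, y * x⁆ := by rw [hxy, lie_smul_right]
  rw [lie_mul_leibniz, lie_mul_leibniz, hy, hz] at bracket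
  linear_combination (norm := module) bracket

theorem mul_lie_lie_lie_add_eq (hy : ⁅A, x⁆ = y) (hz : ⁅A, y⁆ = z) (hz' : ⁅A, z⁆ = z')
    (hxz : x * z = t • (z * x) + (t - 1) • (y * y)) :
    x * z' + (2 - t) • (y * z) = t • (z' * x) + (2 * t - 1) • (z * y) := by
  have bracket : ⁅A, x * z⁆ = t • ⁅A, z * x⁆ + (t - 1) • ⁅A, y * y⁆ := by
    rw [hxz, lie_add, lie_smul_right, lie_smul_right]
  simp only [lie_mul_leibniz, hy, hz, hz'] at bracket
  linear_combination (norm := module) bracket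

theorem mul_lie_lie_lie_eq (hy : ⁅A, x⁆ = y) (hz : ⁅A, y⁆ = z) (hz' : ⁅A, z⁆ = z')
    (hxz : x * z = t • (z * x) + (t - 1) • (y * y)) (hyz : y * z = t • (z * y)) :
    x * z' = t • (z' * x) + (t ^ 2 - 1) • (z * y) := by
  linear_combination (norm := module) mul_lie_lie_lie_add_eq hy hz hz' hxz + (t - 2) • hyz

theorem lie_mul_lie_lie_eq (hb : b ≠ 0) (h2 : 1 + t ^ 2 ≠ 0) (hy : ⁅A, x⁆ = y) (hz : ⁅A, y⁆ = z)
    (hxy : x * y = t • (y * x)) (hψx : t • ⁅ψ, x⁆ = b • (A * y - t ^ 2 • (y * A)))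
    (hψy : t • ⁅ψ, y⁆ = b • (A * z - t ^ 2 • (z * A))) :
    y * z = t • (z * y) := by
  have hxz := mul_lie_lie_eq hy hz hxy
  have hxz' := mul_lie_lie_lie_add_eq hy hz rfl hxz
  have bracket_ψ : (A * y - t ^ 2 • (y * A)) * y + x * (A * z - t ^ 2 • (z * A)) =
      t • ((A * z - t ^ 2 • (z * A)) * x + y * (A * y - t ^ 2 • (y * A))) := by
    apply smul_right_injective R hb
    have leibniz : t • ⁅ψ, x⁆ * y + x * (t • ⁅ψ, y⁆) =
        t • (t • ⁅ψ, y⁆ * x + y * (t • ⁅ψ, x⁆)) := by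
      have h : ⁅ψ, x * y⁆ = t • ⁅ψ, y * x⁆ := by rw [hxy, lie_smul_right]
      rw [lie_mul_leibniz, lie_mul_leibniz] at h
      simp only [smul_mul_assoc, mul_smul_comm]
      linear_combination (norm := module) t • h
    rw [hψx, hψy] at leibniz
    simp only [smul_mul_assoc, mul_smul_comm] at leibniz ⊢
    linear_combination (norm := module) leibniz
  have left_mul_A : ∀ {a a' : R}, ⁅A, a⁆ = a' → ∀ r, a * (A * r) = A * (a * r) - a' * r := by
    rintro a _ rfl r
    rw [Ring.lie_def, sub_mul, mul_assoc, mul_assoc]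
    abel
  have right_mul_A : ∀ {a a' : R}, ⁅A, a⁆ = a' → a * A = A * a - a' := by
    rintro a _ rfl
    rw [Ring.lie_def]
    abel
  have hAxz := congrArg (A * ·) hxz
  apply smul_right_injective R h2
  simp only [mul_add, mul_sub, sub_mul, smul_add, smul_sub, mul_assoc, smul_mul_assoc,
    mul_smul_comm, left_mul_A hy, left_mul_A hz, right_mul_A hz,
    right_mul_A (rfl : ⁅A, z⁆ = _)] at bracket_ψ hAxz ⊢
  linear_combination (norm := module) (-1 : K) • bracket_ψ + (1 - t ^ 2) • hAxz + t ^ 2 • hxz'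

theorem mul_lie_eq_of_serre {q : K} (hq : q ≠ 0) (hb : q + q⁻¹ ≠ 0)
    (hA : (q + q⁻¹) • A = f * e - q⁻¹ ^ 2 • (e * f))
    (serre : e ^ 3 * f - (q ^ 2 + 1 + q⁻¹ ^ 2) • (e ^ 2 * f * e)
        + (q ^ 2 + 1 + q⁻¹ ^ 2) • (e * f * e ^ 2) - f * e ^ 3 = 0) :
    e * ⁅A, e⁆ = q⁻¹ ^ 2 • (⁅A, e⁆ * e) := by
  apply smul_right_injective R hb
  have smul_lie : (q + q⁻¹) • ⁅A, e⁆ = ⁅f * e - q⁻¹ ^ 2 • (e * f), e⁆ := by rw [← hA, smul_lie]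
  have expand : e * ⁅f * e - q⁻¹ ^ 2 • (e * f), e⁆ =
      q⁻¹ ^ 2 • (⁅f * e - q⁻¹ ^ 2 • (e * f), e⁆ * e) := by
    simp only [pow_succ, pow_zero, one_mul] at serre
    simp only [Ring.lie_def, mul_sub, sub_mul, smul_sub, mul_smul_comm, smul_mul_assoc,
      mul_assoc] at serre ⊢
    linear_combination (norm := skip) (q⁻¹ ^ 2) • serre
    match_scalars <;> field
  simpa only [← smul_lie, mul_smul_comm, smul_mul_assoc, smul_comm (q⁻¹ ^ 2)] using expand

theorem smul_mul_lie_eq_of_serre {q : K} (hq : q ≠ 0) (hb : q + q⁻¹ ≠ 0)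
    (hA : (q + q⁻¹) • A = f * e - q⁻¹ ^ 2 • (e * f))
    (serre : f ^ 3 * e - (q ^ 2 + 1 + q⁻¹ ^ 2) • (f ^ 2 * e * f)
        + (q ^ 2 + 1 + q⁻¹ ^ 2) • (f * e * f ^ 2) - e * f ^ 3 = 0) :
    q⁻¹ ^ 2 • (f * ⁅A, f⁆) = ⁅A, f⁆ * f := by
  apply smul_right_injective R hb
  have smul_lie : (q + q⁻¹) • ⁅A, f⁆ = ⁅f * e - q⁻¹ ^ 2 • (e * f), f⁆ := by rw [← hA, smul_lie]
  have expand : q⁻¹ ^ 2 • (f * ⁅f * e - q⁻¹ ^ 2 • (e * f), f⁆) =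
      ⁅f * e - q⁻¹ ^ 2 • (e * f), f⁆ * f := by
    simp only [pow_succ, pow_zero, one_mul] at serre
    simp only [Ring.lie_def, mul_sub, sub_mul, smul_sub, mul_smul_comm, smul_mul_assoc,
      mul_assoc] at serre ⊢
    linear_combination (norm := skip) (-q⁻¹ ^ 2) • serre
    match_scalars <;> field
  simpa only [← smul_lie, mul_smul_comm, smul_mul_assoc, smul_comm (q⁻¹ ^ 2)] using expand

end SerreRelations

/-- The straightening relations `u i * u j = q⁻² u j u i + …` for `i < j` satisfied by the
root vectors `u 0, u 1, u 2, u 3`; they put every product into the PBW order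
`u 3, u 2, u 1, u 0`. -/
structure StraighteningRelations {K R : Type*} [Field K] [Ring R] [Algebra K R] (q : K)
    (u : Fin 4 → R) : Prop where
  mul01 : u 0 * u 1 = q ^ (-2 : ℤ) • (u 1 * u 0)
  mul12 : u 1 * u 2 = q ^ (-2 : ℤ) • (u 2 * u 1)
  mul23 : u 2 * u 3 = q ^ (-2 : ℤ) • (u 3 * u 2)
  mul02 : u 0 * u 2 = q ^ (-2 : ℤ) • (u 2 * u 0) + (q ^ (-2 : ℤ) - 1) • (u 1 * u 1)
  mul13 : u 1 * u 3 = q ^ (-2 : ℤ) • (u 3 * u 1) + (q ^ (-2 : ℤ) - 1) • (u 2 * u 2)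
  mul03 : u 0 * u 3 = q ^ (-2 : ℤ) • (u 3 * u 0) + (q ^ (-4 : ℤ) - 1) • (u 2 * u 1)

section NotRootOfUnity

variable {K : Type*} [Field K] {q : K}

theorem pow_ne_one_of_not_isOfFinOrder (hord : ¬IsOfFinOrder q) {m : ℕ} (hm : 0 < m) :
    q ^ m ≠ 1 :=
  fun h => hord (isOfFinOrder_iff_pow_eq_one.mpr ⟨m, hm, h⟩)

theorem add_inv_ne_zero (hq : q ≠ 0) (hord : ¬IsOfFinOrder q) : q + q⁻¹ ≠ 0 := by
  intro h
  field_simp at h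
  exact pow_ne_one_of_not_isOfFinOrder hord (m := 4) (by norm_num)
    (by linear_combination (q ^ 2 - 1) * h)

theorem one_add_inv_sq_add_ne_zero (hq : q ≠ 0) (hord : ¬IsOfFinOrder q) :
    1 + q⁻¹ ^ 2 + (q⁻¹ ^ 2) ^ 2 ≠ 0 := by
  intro h
  field_simp at h
  exact pow_ne_one_of_not_isOfFinOrder hord (m := 6) (by norm_num)
    (by linear_combination (q ^ 2 - 1) * h)

theorem one_add_inv_sq_sq_ne_zero (hq : q ≠ 0) (hord : ¬IsOfFinOrder q) :
    1 + (q⁻¹ ^ 2) ^ 2 ≠ 0 := by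
  intro h
  field_simp at h
  exact pow_ne_one_of_not_isOfFinOrder hord (m := 8) (by norm_num)
    (by linear_combination (q ^ 4 - 1) * h)

end NotRootOfUnity

section

variable {K R : Type*} [Field K] [Ring R] [Algebra K R] {q : K}

theorem straighteningRelations_of_serre (hq : q ≠ 0) (hord : ¬IsOfFinOrder q) {e f A : R}
    (hA : A = (q + q⁻¹)⁻¹ • (f * e - q⁻¹ ^ 2 • (e * f)))
    (serre_e : e ^ 3 * f - (q ^ 2 + 1 + q⁻¹ ^ 2) • (e ^ 2 * f * e)
        + (q ^ 2 + 1 + q⁻¹ ^ 2) • (e * f * e ^ 2) - f * e ^ 3 = 0)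
    (serre_f : f ^ 3 * e - (q ^ 2 + 1 + q⁻¹ ^ 2) • (f ^ 2 * e * f)
        + (q ^ 2 + 1 + q⁻¹ ^ 2) • (f * e * f ^ 2) - e * f ^ 3 = 0) :
    StraighteningRelations q ![e, ⁅A, e⁆, ⁅A, ⁅A, e⁆⁆, ⁅A, ⁅A, ⁅A, e⁆⁆⁆] := by
  have hb := add_inv_ne_zero hq hord
  have h2 := one_add_inv_sq_sq_ne_zero hq hord
  have hbA : (q + q⁻¹) • A = f * e - q⁻¹ ^ 2 • (e * f) := by
    rw [hA, smul_smul, mul_inv_cancel₀ hb, one_smul]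
  have mul01 := mul_lie_eq_of_serre hq hb hbA serre_e
  obtain ⟨ψ, hψA, hψ0⟩ := exists_commute_smul_lie_eq hb (one_add_inv_sq_add_ne_zero hq hord)
    (by rw [hbA]; abel) mul01 (smul_mul_lie_eq_of_serre hq hb hbA serre_f)
  have hψ1 := smul_lie_lie_eq hψA rfl rfl hψ0
  have hψ2 := smul_lie_lie_eq hψA rfl rfl hψ1
  have mul12 := lie_mul_lie_lie_eq hb h2 rfl rfl mul01 hψ0 hψ1
  have mul02 := mul_lie_lie_eq rfl rfl mul01
  have hsq : q ^ (-2 : ℤ) = q⁻¹ ^ 2 := by rw [zpow_neg, inv_pow]; norm_cast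
  have hfourth : q ^ (-4 : ℤ) = (q⁻¹ ^ 2) ^ 2 := by rw [← hsq, ← zpow_natCast, ← zpow_mul]; rfl
  constructor <;> simp only [hsq, hfourth]
  exacts [mul01, mul12, lie_mul_lie_lie_eq hb h2 rfl rfl mul12 hψ1 hψ2, mul02,
    mul_lie_lie_eq rfl rfl mul12, mul_lie_lie_lie_eq rfl rfl rfl mul02 mul12]

namespace StraighteningRelations

theorem scale {u : Fin 4 → R} (h : StraighteningRelations q u) (c : K) :
    StraighteningRelations q (fun i => c ^ (2 * (i : ℕ)) • u i) := by
  obtain ⟨h01, h12, h23, h02, h13, h03⟩ := h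
  constructor <;> simp [*] <;> module

open MulOpposite in
theorem op_rev {u : Fin 4 → R} (h : StraighteningRelations q u) :
    StraighteningRelations q (fun i => op (u i.rev)) :=
  ⟨congrArg op h.mul23, congrArg op h.mul12, congrArg op h.mul01, congrArg op h.mul13,
    congrArg op h.mul02, congrArg op h.mul03⟩

end StraighteningRelations

end

/-! ### Quantum minors -/

section QCommutation

variable {K R : Type*} [Field K] [Ring R] [Algebra K R] {q : K} {a b : ℤ} {x y z : R}

/-- `x` and `y` commute up to the scalar `q ^ a`. -/
def QComm (q : K) (a : ℤ) (x y : R) : Prop := x * y = q ^ a • (y * x)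

namespace QComm

theorem mul_left_comm (h : QComm q a x y) (z : R) : x * (y * z) = q ^ a • (y * (x * z)) := by
  rw [← mul_assoc, h, smul_mul_assoc, mul_assoc]

theorem refl (q : K) (x : R) : QComm q 0 x x := by simp [QComm]

theorem congr (h : QComm q a x y) (hab : a = b) : QComm q b x y := hab ▸ h

theorem symm (hq : q ≠ 0) (h : QComm q a x y) : QComm q (-a) y x := by
  rw [QComm, h, smul_smul, ← zpow_add₀ hq, neg_add_cancel, zpow_zero, one_smul]

theorem unop {x y : Rᵐᵒᵖ} (h : QComm q a x y) : QComm q a y.unop x.unop :=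
  congrArg MulOpposite.unop h

theorem mul_left (hq : q ≠ 0) (hx : QComm q a x z) (hy : QComm q b y z) :
    QComm q (a + b) (x * y) z := by
  rw [QComm, mul_assoc, hy, mul_smul_comm, ← mul_assoc, hx, smul_mul_assoc, smul_smul, add_comm,
    zpow_add₀ hq, mul_assoc]

theorem mul_right (hq : q ≠ 0) (hy : QComm q a x y) (hz : QComm q b x z) :
    QComm q (a + b) x (y * z) := by
  rw [QComm, ← mul_assoc, hy, smul_mul_assoc, mul_assoc, hz, mul_smul_comm, smul_smul,
    zpow_add₀ hq, mul_assoc]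

theorem pow_left (hq : q ≠ 0) (h : QComm q a x y) (n : ℕ) : QComm q (n * a) (x ^ n) y := by
  induction n with
  | zero => simp [QComm]
  | succ n ih => exact pow_succ x n ▸ (ih.mul_left hq h).congr (by push_cast; ring)

theorem pow_right (hq : q ≠ 0) (h : QComm q a x y) (n : ℕ) : QComm q (n * a) x (y ^ n) := by
  induction n with
  | zero => simp [QComm]
  | succ n ih => exact pow_succ y n ▸ (ih.mul_right hq h).congr (by push_cast; ring)

theorem sub_smul_left (c : K) (hx : QComm q a x z) (hy : QComm q a y z) :
    QComm q a (x - c • y) z := by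
  rw [QComm, mul_sub, sub_mul, hx, mul_smul_comm, smul_mul_assoc, hy, smul_sub, smul_comm]

theorem sub_smul_right (c : K) (hy : QComm q a x y) (hz : QComm q a x z) :
    QComm q a x (y - c • z) := by
  rw [QComm, mul_sub, sub_mul, hy, mul_smul_comm, hz, smul_mul_assoc, smul_sub, smul_comm]

end QComm

end QCommutation

section QuantumMinors

open MulOpposite

variable {K R : Type*} [Field K] [Ring R] [Algebra K R] {q : K} {u : Fin 4 → R}

/-- The quantum minor `p₁ = u₃u₁ - q²u₂²`. -/
def minor₁ (q : K) (u : Fin 4 → R) : R := u 3 * u 1 - q ^ 2 • u 2 ^ 2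

/-- The quantum minor `p₀ = u₂u₀ - q²u₁²`. -/
def minor₀ (q : K) (u : Fin 4 → R) : R := u 2 * u 0 - q ^ 2 • u 1 ^ 2

theorem minor₁_op_rev : minor₁ q (fun i => op (u i.rev)) = op (minor₀ q u) := rfl

theorem minor₀_op_rev : minor₀ q (fun i => op (u i.rev)) = op (minor₁ q u) := rfl

theorem mul31_eq : u 3 * u 1 = minor₁ q u + q ^ (2 : ℤ) • (u 2 * u 2) := by
  rw [minor₁, pow_two (u 2), show q ^ (2 : ℤ) = q ^ 2 by norm_cast, sub_add_cancel]

namespace StraighteningRelations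

theorem minor₁_u3 (h : StraighteningRelations q u) (hq : q ≠ 0) :
    QComm q (-2) (minor₁ q u) (u 3) := by
  have h23 : QComm q (-2) (u 2) (u 3) := h.mul23
  simp only [QComm, minor₁, pow_two, mul_sub, sub_mul, mul_smul_comm, smul_mul_assoc, mul_assoc,
    h.mul13, h.mul23, h23.mul_left_comm, mul_add]
  match_scalars <;> field

theorem minor₁_u2 (h : StraighteningRelations q u) (hq : q ≠ 0) :
    QComm q 0 (minor₁ q u) (u 2) :=
  .sub_smul_left _ ((QComm.symm hq h.mul23).mul_left hq h.mul12)
    (((QComm.refl q (u 2)).pow_left hq 2).congr (mul_zero _))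

theorem u1_minor₁ (h : StraighteningRelations q u) (hq : q ≠ 0) :
    QComm q (-2) (u 1) (minor₁ q u) := by
  have h12 : QComm q (-2) (u 1) (u 2) := h.mul12
  simp only [QComm, minor₁, pow_two, mul_sub, sub_mul, mul_smul_comm, smul_mul_assoc, mul_assoc,
    h.mul12, h12.mul_left_comm]
  rw [← mul_assoc (u 1), h.mul13]
  simp only [add_mul, smul_mul_assoc, mul_assoc]
  match_scalars <;> field

theorem u1_minor₀ (h : StraighteningRelations q u) (hq : q ≠ 0) :
    QComm q 0 (u 1) (minor₀ q u) :=
  (h.op_rev.minor₁_u2 hq).unop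

theorem minor₀_u2 (h : StraighteningRelations q u) (hq : q ≠ 0) :
    QComm q (-2) (minor₀ q u) (u 2) :=
  (h.op_rev.u1_minor₁ hq).unop

theorem minor₀_u3 (h : StraighteningRelations q u) (hq : q ≠ 0) :
    QComm q (-4) (minor₀ q u) (u 3) := by
  have h12 : QComm q (-2) (u 1) (u 2) := h.mul12
  have h23 : QComm q (-2) (u 2) (u 3) := h.mul23
  have mul13' : ∀ z, u 1 * (u 3 * z) =
      q ^ (-2 : ℤ) • (u 3 * (u 1 * z)) + (q ^ (-2 : ℤ) - 1) • (u 2 * (u 2 * z)) := fun z => by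
    rw [← mul_assoc, h.mul13]
    simp only [add_mul, smul_mul_assoc, mul_assoc]
  simp only [QComm, minor₀, pow_two, mul_sub, sub_mul, mul_smul_comm, smul_mul_assoc, mul_assoc,
    h.mul12, h.mul03, h.mul13, mul13', h12.mul_left_comm, h23.mul_left_comm, mul_add]
  match_scalars <;> field

theorem minor₀_minor₁ (h : StraighteningRelations q u) (hq : q ≠ 0) :
    QComm q (-4) (minor₀ q u) (minor₁ q u) :=
  .sub_smul_right _ ((h.minor₀_u3 hq).mul_right hq ((h.u1_minor₀ hq).symm hq))
    ((h.minor₀_u2 hq).pow_right hq 2)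

end StraighteningRelations

/-- The monomials `p₁ᵃ u₂²ᵏ u₁²ˡ p₀ᵇ` in four elements which commute up to powers of `q`. -/
def torusMonomial (q : K) (u : Fin 4 → R) (a k l b : ℕ) : R :=
  minor₁ q u ^ a * u 2 ^ (2 * k) * u 1 ^ (2 * l) * minor₀ q u ^ b

theorem torusMonomial_op_rev (a k l b : ℕ) :
    torusMonomial q (fun i => op (u i.rev)) a k l b = op (torusMonomial q u b l k a) := by
  simp only [torusMonomial, minor₁_op_rev, minor₀_op_rev, op_mul, op_pow, mul_assoc]
  rfl

theorem minor₁_mul_torusMonomial (a k l b : ℕ) :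
    minor₁ q u * torusMonomial q u a k l b = torusMonomial q u (a + 1) k l b := by
  simp only [torusMonomial, pow_succ' (minor₁ q u), mul_assoc]

namespace StraighteningRelations

theorem torusMonomial_u1 (h : StraighteningRelations q u) (hq : q ≠ 0) (a k l b : ℕ) :
    QComm q (2 * a + 4 * k) (torusMonomial q u a k l b) (u 1) := by
  have h21 : QComm q 2 (u 2) (u 1) := QComm.symm hq h.mul12
  refine QComm.congr ((((((h.u1_minor₁ hq).symm hq).pow_left hq a).mul_left hq
    (h21.pow_left hq (2 * k))).mul_left hq ((QComm.refl q (u 1)).pow_left hq (2 * l))).mul_left hq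
    (((h.u1_minor₀ hq).symm hq).pow_left hq b)) ?_
  push_cast
  ring

theorem u2_torusMonomial (h : StraighteningRelations q u) (hq : q ≠ 0) (a k l b : ℕ) :
    QComm q (2 * b + 4 * l) (u 2) (torusMonomial q u a k l b) := by
  have := h.op_rev.torusMonomial_u1 hq b l k a
  rw [torusMonomial_op_rev] at this
  exact this.unop

theorem u2_sq_mul_torusMonomial (h : StraighteningRelations q u) (hq : q ≠ 0) (a k l b : ℕ) :
    u 2 * (u 2 * torusMonomial q u a k l b) = torusMonomial q u a (k + 1) l b := by
  have comm : QComm q 0 (u 2) (minor₁ q u ^ a) :=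
    (((h.minor₁_u2 hq).symm hq).pow_right hq a).congr (by simp)
  simp only [torusMonomial, mul_assoc, comm.mul_left_comm, zpow_zero, one_smul, mul_add_one 2 k,
    pow_succ' (u 2)]

theorem torusMonomial_mul_u1_sq (h : StraighteningRelations q u) (hq : q ≠ 0) (a k l b : ℕ) :
    torusMonomial q u a k l b * u 1 * u 1 = torusMonomial q u a k (l + 1) b := by
  have := h.op_rev.u2_sq_mul_torusMonomial hq b l k a
  rw [torusMonomial_op_rev, torusMonomial_op_rev] at this
  exact op_injective this

theorem u3_mul_torusMonomial_mul_u1 (h : StraighteningRelations q u) (hq : q ≠ 0)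
    (a k l b : ℕ) :
    u 3 * torusMonomial q u a k l b * u 1 =
      q ^ (2 * a + 4 * k : ℤ) • torusMonomial q u (a + 1) k l b +
        q ^ (2 * a + 4 * k + 2 : ℤ) • torusMonomial q u a (k + 1) l b := by
  rw [mul_assoc, h.torusMonomial_u1 hq, mul_smul_comm, ← mul_assoc, mul31_eq (q := q), add_mul,
    minor₁_mul_torusMonomial, smul_mul_assoc, mul_assoc, h.u2_sq_mul_torusMonomial hq, smul_add,
    smul_smul, ← zpow_add₀ hq]

end StraighteningRelations

end QuantumMinors

/-! ### Quantum binomial sums of torus monomials -/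

section QuantumBinomials

variable {K : Type*} [Field K] {q : K}

/-- The quantum integer `[m] = (q^m - q^{-m}) / (q - q⁻¹)`. -/
def quantumInt (q : K) (m : ℤ) : K := (q ^ m - q ^ (-m)) / (q - q⁻¹)

/-- The quantum binomial coefficient `[m][m-1]⋯[m-i+1] / ([i][i-1]⋯[1])`. -/
def quantumChoose (q : K) (m : ℤ) (i : ℕ) : K :=
  (∏ j ∈ Finset.range i, quantumInt q (m - j)) / ∏ j ∈ Finset.range i, quantumInt q (j + 1)

theorem quantumInt_succ_ne_zero (hq : q ≠ 0) (hord : ¬IsOfFinOrder q) (i : ℕ) :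
    quantumInt q (i + 1) ≠ 0 := by
  have sub_inv_ne_zero : ∀ j : ℕ, q ^ (j + 1 : ℤ) - q ^ (-(j + 1) : ℤ) ≠ 0 := fun j hj => by
    refine pow_ne_one_of_not_isOfFinOrder hord (m := 2 * (j + 1)) (by omega) ?_
    rw [sub_eq_zero, zpow_neg, ← mul_eq_one_iff_eq_inv₀ (zpow_ne_zero _ hq)] at hj
    rw [two_mul, pow_add]
    exact_mod_cast hj
  exact div_ne_zero (sub_inv_ne_zero i) (by simpa using sub_inv_ne_zero 0)

theorem quantumChoose_zero_right (q : K) (m : ℤ) : quantumChoose q m 0 = 1 := by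
  simp [quantumChoose]

theorem quantumChoose_eq_zero {m : ℤ} {i : ℕ} (hm : 0 ≤ m) (hmi : m < i) :
    quantumChoose q m i = 0 := by
  lift m to ℕ using hm
  have : ∏ j ∈ Finset.range i, quantumInt q ((m : ℤ) - j) = 0 :=
    Finset.prod_eq_zero (Finset.mem_range.mpr (Nat.cast_lt.mp hmi)) (by simp [quantumInt])
  rw [quantumChoose, this, zero_div]

theorem quantumInt_inv (q : K) (m : ℤ) : quantumInt q⁻¹ m = quantumInt q m := by
  rw [quantumInt, quantumInt, inv_zpow', inv_zpow', inv_inv, neg_neg, ← neg_sub (q ^ m),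
    ← neg_sub q, neg_div_neg_eq]

theorem quantumInt_add_one (hq : q ≠ 0) (m i : ℤ) :
    quantumInt q (m + 1) =
      q ^ (i + 1) * quantumInt q (m - i) + q ^ (i - m) * quantumInt q (i + 1) := by
  simp only [quantumInt, ← mul_div_assoc, ← add_div, mul_sub, ← zpow_add₀ hq]
  ring_nf

theorem quantumChoose_pascal (hq : q ≠ 0) (hord : ¬IsOfFinOrder q) (m : ℤ) (i : ℕ) :
    quantumChoose q (m + 1) (i + 1) =
      q ^ (i + 1 : ℤ) * quantumChoose q m (i + 1) + q ^ (i - m : ℤ) * quantumChoose q m i := by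
  have prod_succ : ∏ j ∈ Finset.range (i + 1), quantumInt q (m + 1 - j) =
      (∏ j ∈ Finset.range i, quantumInt q (m - j)) * quantumInt q (m + 1) := by
    rw [Finset.prod_range_succ']
    simp [add_sub_add_right_eq_sub]
  have fact_ne_zero : ∏ j ∈ Finset.range i, quantumInt q (j + 1) ≠ 0 :=
    Finset.prod_ne_zero_iff.mpr fun j _ => quantumInt_succ_ne_zero hq hord j
  have int_ne_zero := quantumInt_succ_ne_zero hq hord i
  simp only [quantumChoose]
  rw [prod_succ, Finset.prod_range_succ, Finset.prod_range_succ, quantumInt_add_one hq m i]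
  field_simp

theorem quantumChoose_inv (q : K) (m : ℤ) (i : ℕ) :
    quantumChoose q⁻¹ m i = quantumChoose q m i := by
  simp only [quantumChoose, quantumInt_inv]

theorem quantumChoose_pascal' (hq : q ≠ 0) (hord : ¬IsOfFinOrder q) (m : ℤ) (i : ℕ) :
    quantumChoose q (m + 1) (i + 1) =
      q ^ (-(i + 1) : ℤ) * quantumChoose q m (i + 1) + q ^ (m - i : ℤ) * quantumChoose q m i := by
  have hord' : ¬IsOfFinOrder q⁻¹ := by
    simpa only [isOfFinOrder_iff_pow_eq_one, inv_pow, inv_eq_one] using hord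
  simpa only [quantumChoose_inv, inv_zpow', neg_sub] using
    quantumChoose_pascal (inv_ne_zero hq) hord' m i

theorem map_quantumChoose {L : Type*} [Field L] (f : K →+* L) (q : K) (m : ℤ) (i : ℕ) :
    f (quantumChoose q m i) = quantumChoose (f q) m i := by
  simp [quantumChoose, quantumInt]

/-- The coefficient of `p₁^{m-k} u₂^{2k} u₁^{2l} p₀^{n-l}` in `minorSum q u m n`. -/
def minorCoeff (q : K) (m n k l : ℕ) : K :=
  q ^ (k * (m + 1) + l * (n + 1) - 2 * k * l : ℤ) *
    (quantumChoose q (n - k) l * quantumChoose q (m - l) k)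

theorem minorCoeff_swap (q : K) (m n k l : ℕ) : minorCoeff q m n k l = minorCoeff q n m l k := by
  simp only [minorCoeff]
  ring_nf

theorem minorCoeff_succ_left {m n l : ℕ} (hnm : n ≤ m + 1) (hl : l ≤ n) :
    minorCoeff q m n (m + 1) l = 0 := by
  rw [minorCoeff, mul_eq_zero, mul_eq_zero]
  rcases le_or_gt l m with hlm | hml
  · exact .inr (.inr (quantumChoose_eq_zero (by omega) (by omega)))
  · exact .inr (.inl (quantumChoose_eq_zero (by omega) (by omega)))

theorem minorCoeff_zero_add_two (m n l : ℕ) :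
    minorCoeff q (m + 2) n 0 l = minorCoeff q (m + 1) n 0 l := by
  simp [minorCoeff, quantumChoose_zero_right]

theorem minorCoeff_succ_zero (hq : q ≠ 0) (hord : ¬IsOfFinOrder q) (m n k : ℕ) :
    minorCoeff q (m + 2) n (k + 1) 0 =
      q ^ (2 * (k + 1) : ℤ) * minorCoeff q (m + 1) n (k + 1) 0 +
        q ^ (2 * (k + 1) : ℤ) * minorCoeff q (m + 1) n k 0 := by
  simp only [minorCoeff, quantumChoose_zero_right, one_mul, ← mul_assoc, ← zpow_add₀ hq]
  push_cast
  rw [show (m + 2 - 0 : ℤ) = m + 1 - 0 + 1 by ring, quantumChoose_pascal hq hord, mul_add,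
    ← mul_assoc, ← zpow_add₀ hq, ← mul_assoc, ← zpow_add₀ hq]
  ring_nf

theorem minorCoeff_succ_succ (hq : q ≠ 0) (hord : ¬IsOfFinOrder q) (m n k l : ℕ) :
    minorCoeff q (m + 2) (n + 1) (k + 1) (l + 1) =
      q ^ (2 * (k + 1) : ℤ) * minorCoeff q (m + 1) (n + 1) (k + 1) (l + 1) +
        q ^ (2 * (k + 1) : ℤ) * minorCoeff q (m + 1) (n + 1) k (l + 1) -
        q ^ (2 * n + 4 : ℤ) * minorCoeff q m n k l := by
  simp only [minorCoeff, ← mul_assoc, ← zpow_add₀ hq]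
  push_cast
  rw [show (m + 2 - (l + 1) : ℤ) = m - l + 1 by ring, show (n + 1 - (k + 1) : ℤ) = n - k by ring,
    show (m + 1 - (l + 1) : ℤ) = m - l by ring, show (n + 1 - k : ℤ) = n - k + 1 by ring,
    quantumChoose_pascal hq hord, quantumChoose_pascal' hq hord]
  simp only [mul_add, add_mul, mul_assoc, mul_left_comm (quantumChoose _ _ _) (q ^ (_ : ℤ))]
  simp only [← mul_assoc, ← zpow_add₀ hq]
  ring_nf

end QuantumBinomials

section MinorSums

open MulOpposite

variable {K R : Type*} [Field K] [Ring R] [Algebra K R] {q : K} {u : Fin 4 → R}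

theorem sum_sum_smul_eq_of_recurrence {m n : ℕ} {c A B D : ℕ → ℕ → K} (f : ℕ → ℕ → R)
    (zero_left : ∀ l, c 0 l = A 0 l)
    (succ_zero : ∀ k, c (k + 1) 0 = A (k + 1) 0 + B k 0)
    (succ_succ : ∀ k l, c (k + 1) (l + 1) = A (k + 1) (l + 1) + B k (l + 1) - D k l)
    (A_top : ∀ l ≤ n, A (m + 1) l = 0) (D_top : ∀ l < n, D m l = 0) :
    ∑ k ∈ Finset.range (m + 2), ∑ l ∈ Finset.range (n + 1), c k l • f k l =
      ∑ k ∈ Finset.range (m + 1), ∑ l ∈ Finset.range (n + 1),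
          (A k l • f k l + B k l • f (k + 1) l) -
        ∑ k ∈ Finset.range m, ∑ l ∈ Finset.range n, D k l • f (k + 1) (l + 1) := by
  have row : ∀ k, ∑ l ∈ Finset.range (n + 1), c (k + 1) l • f (k + 1) l =
      ∑ l ∈ Finset.range (n + 1), A (k + 1) l • f (k + 1) l +
        ∑ l ∈ Finset.range (n + 1), B k l • f (k + 1) l -
        ∑ l ∈ Finset.range n, D k l • f (k + 1) (l + 1) := fun k => by
    simp only [Finset.sum_range_succ' _ n, succ_zero, succ_succ, add_smul, sub_smul,
      Finset.sum_add_distrib, Finset.sum_sub_distrib]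
    abel
  have A_row : ∑ l ∈ Finset.range (n + 1), A (m + 1) l • f (m + 1) l = 0 :=
    Finset.sum_eq_zero fun l hl => by
      rw [A_top l (Finset.mem_range_succ_iff.mp hl), zero_smul]
  have D_row : ∑ l ∈ Finset.range n, D m l • f (m + 1) (l + 1) = 0 :=
    Finset.sum_eq_zero fun l hl => by rw [D_top l (Finset.mem_range.mp hl), zero_smul]
  have A_shift : ∑ k ∈ Finset.range (m + 1), ∑ l ∈ Finset.range (n + 1), A k l • f k l =
      ∑ k ∈ Finset.range (m + 1), ∑ l ∈ Finset.range (n + 1), A (k + 1) l • f (k + 1) l +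
        ∑ l ∈ Finset.range (n + 1), A 0 l • f 0 l := by
    rw [← Finset.sum_range_succ' (fun k => ∑ l ∈ Finset.range (n + 1), A k l • f k l),
      Finset.sum_range_succ _ (m + 1), A_row, add_zero]
  rw [Finset.sum_range_succ']
  simp only [row, zero_left, Finset.sum_add_distrib, Finset.sum_sub_distrib, A_shift]
  rw [Finset.sum_range_succ (fun k => ∑ l ∈ Finset.range n, D k l • f (k + 1) (l + 1)), D_row]
  abel

/-- The sum `∑ q^{k(m+1)+l(n+1)-2kl} [n-k; l] [m-l; k] p₁^{m-k} u₂^{2k} u₁^{2l} p₀^{n-l}` over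
`k ≤ m` and `l ≤ n`. -/
def minorSum (q : K) (u : Fin 4 → R) (m n : ℕ) : R :=
  ∑ k ∈ Finset.range (m + 1), ∑ l ∈ Finset.range (n + 1),
    minorCoeff q m n k l • torusMonomial q u (m - k) k l (n - l)

theorem minorSum_op_rev (m n : ℕ) :
    minorSum q (fun i => op (u i.rev)) m n = op (minorSum q u n m) := by
  simp only [minorSum, torusMonomial_op_rev, minorCoeff_swap q m n, Finset.op_sum, op_smul]
  exact Finset.sum_comm

theorem StraighteningRelations.minorSum_add_two_left (h : StraighteningRelations q u) (hq : q ≠ 0)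
    (hord : ¬IsOfFinOrder q) {m n : ℕ} (hnm : n ≤ m + 1) :
    minorSum q u (m + 2) (n + 1) =
      q ^ (-2 * (m + 1) : ℤ) • (u 3 * minorSum q u (m + 1) (n + 1) * u 1) -
        q ^ (2 * n + 4 : ℤ) • (minor₁ q u * (u 2 * (u 2 * minorSum q u m n * u 1 * u 1))) := by
  rw [minorSum, sum_sum_smul_eq_of_recurrence
    (A := fun k l => q ^ (2 * k : ℤ) * minorCoeff q (m + 1) (n + 1) k l)
    (B := fun k l => q ^ (2 * (k + 1) : ℤ) * minorCoeff q (m + 1) (n + 1) k l)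
    (D := fun k l => q ^ (2 * n + 4 : ℤ) * minorCoeff q m n k l) _
    (fun l => by simp [minorCoeff_zero_add_two])
    (fun k => by exact_mod_cast minorCoeff_succ_zero hq hord m (n + 1) k)
    (fun k l => by exact_mod_cast minorCoeff_succ_succ hq hord m n k l)
    (fun l hl => by rw [minorCoeff_succ_left (by omega) hl, mul_zero])
    (fun l hl => by rw [minorCoeff_succ_left hnm (Nat.lt_succ_iff.mp hl), mul_zero])]
  simp only [minorSum, Finset.mul_sum, Finset.sum_mul, Finset.smul_sum, mul_smul_comm,
    smul_mul_assoc]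
  congr 1 <;> refine Finset.sum_congr rfl fun k hk => Finset.sum_congr rfl fun l hl => ?_
  all_goals rw [Finset.mem_range_succ_iff] at hk
  · rw [h.u3_mul_torusMonomial_mul_u1 hq, show m + 2 - k = m + 1 - k + 1 by omega,
      show m + 2 - (k + 1) = m + 1 - k by omega, Nat.cast_sub hk]
    simp only [smul_add, smul_smul, mul_left_comm _ (minorCoeff _ _ _ _ _), ← zpow_add₀ hq]
    push_cast
    ring_nf
  · rw [mul_assoc (u 2), mul_assoc (u 2), h.torusMonomial_mul_u1_sq hq,
      h.u2_sq_mul_torusMonomial hq, minor₁_mul_torusMonomial, smul_smul, Nat.add_sub_add_right,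
      show m + 2 - (k + 1) = m - k + 1 by omega]

end MinorSums

/-! ### Recursive candidates -/

section Candidates

open MulOpposite

variable {K R : Type*} [Field K] [Ring R] [Algebra K R] {q : K} {u : Fin 4 → R}

mutual

/-- The candidate for the dual canonical basis element `B[n,0,0,n]`. -/
def diagCandidate (q : K) (u : Fin 4 → R) : ℕ → R
  | 0 => 1
  | 1 => u 3 * u 0 - q ^ (2 : ℤ) • (u 2 * u 1)
  | n + 2 =>
    q ^ (n + 1 : ℤ) • (offDiagCandidate q u (n + 1) * u 0) -
      q ^ (5 * n + 4 : ℤ) • (offDiagCandidate q u n * u 1 * minor₀ q u)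
termination_by n => 2 * n

/-- The candidate for the dual canonical basis element `B[n+1,0,0,n]`. -/
def offDiagCandidate (q : K) (u : Fin 4 → R) : ℕ → R
  | 0 => u 3
  | n + 1 =>
    q ^ (n + 1 : ℤ) • (u 3 * diagCandidate q u (n + 1)) -
      q ^ (5 * n + 3 : ℤ) • (minor₁ q u * (u 2 * diagCandidate q u n))
termination_by n => 2 * n + 1

end

theorem minorSum_zero_zero : minorSum q u 0 0 = 1 := by
  simp [minorSum, minorCoeff, quantumChoose_zero_right, torusMonomial]

theorem minorSum_one_zero (hq : q ≠ 0) (hord : ¬IsOfFinOrder q) :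
    minorSum q u 1 0 = u 3 * u 1 := by
  have one_ne_zero : quantumInt q 1 ≠ 0 := by simpa using quantumInt_succ_ne_zero hq hord 0
  rw [mul31_eq (q := q)]
  simp [minorSum, minorCoeff, Finset.sum_range_succ, torusMonomial, quantumChoose, one_ne_zero,
    pow_two]

namespace StraighteningRelations

theorem minorSum_one_one (h : StraighteningRelations q u) (hq : q ≠ 0)
    (hord : ¬IsOfFinOrder q) :
    minorSum q u 1 1 = q ^ (2 : ℤ) • (u 2 * (u 3 * u 0 - q ^ (2 : ℤ) • (u 2 * u 1)) * u 1) := by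
  have one_ne_zero : quantumInt q 1 ≠ 0 := by simpa using quantumInt_succ_ne_zero hq hord 0
  have int_zero : quantumInt q 0 = 0 := by simp [quantumInt]
  have sum_eq : minorSum q u 1 1 = minor₁ q u * minor₀ q u +
      q ^ (2 : ℤ) • (minor₁ q u * (u 1 * u 1)) + q ^ (2 : ℤ) • (u 2 * u 2 * minor₀ q u) := by
    simp [minorSum, minorCoeff, Finset.sum_range_succ, torusMonomial, quantumChoose, one_ne_zero,
      int_zero, pow_two]
  have h21 : QComm q 2 (u 2) (u 1) := QComm.symm hq h.mul12
  have mul20_eq : u 2 * u 0 = minor₀ q u + q ^ (2 : ℤ) • (u 1 * u 1) :=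
    op_injective (mul31_eq (q := q) (u := fun i => op (u i.rev)))
  have outer : u 2 * (u 3 * (u 0 * u 1)) = q ^ (-2 : ℤ) • ((u 3 * u 1) * (u 2 * u 0)) := by
    rw [h.mul01, ← mul_assoc, h.mul23, ← mul_assoc (u 3 * u 1), mul_assoc (u 3) (u 1), h.mul12]
    simp only [mul_smul_comm, smul_mul_assoc, smul_smul, ← zpow_add₀ hq, mul_assoc,
      h21.mul_left_comm]
  rw [mul31_eq (q := q), mul20_eq] at outer
  rw [sum_eq]
  simp only [mul_sub, sub_mul, mul_add, add_mul, mul_assoc, mul_smul_comm, smul_mul_assoc, outer]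
  match_scalars <;> field

theorem conj_step_left (h : StraighteningRelations q u) (hq : q ≠ 0) (hord : ¬IsOfFinOrder q)
    {m n : ℕ} (hnm : n ≤ m + 1) {i j : ℤ} (k : ℤ) {w w' : R}
    (hw : u 2 ^ n * w * u 1 ^ m = q ^ i • minorSum q u m n)
    (hw' : u 2 ^ (n + 1) * w' * u 1 ^ (m + 1) = q ^ j • minorSum q u (m + 1) (n + 1)) :
    u 2 ^ (n + 1) * (q ^ (k - j + 2 * (n - m)) • (u 3 * w') -
        q ^ (k - i + 2 * n + 4) • (minor₁ q u * (u 2 * w))) * u 1 ^ (m + 2) =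
      q ^ k • minorSum q u (m + 2) (n + 1) := by
  have u2_pow_u3 : QComm q (-2 * (n + 1)) (u 2 ^ (n + 1)) (u 3) :=
    (QComm.pow_left hq h.mul23 _).congr (by push_cast; ring)
  have u2_pow_minor₁ : QComm q 0 (u 2 ^ (n + 1)) (minor₁ q u) :=
    (((h.minor₁_u2 hq).symm hq).pow_left hq _).congr (by simp)
  have head : u 2 ^ (n + 1) * (u 3 * w') * u 1 ^ (m + 2) =
      q ^ (j - 2 * (n + 1)) • (u 3 * minorSum q u (m + 1) (n + 1) * u 1) := by
    calc u 2 ^ (n + 1) * (u 3 * w') * u 1 ^ (m + 2)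
      _ = q ^ (-2 * (n + 1) : ℤ) • (u 3 * (u 2 ^ (n + 1) * w' * u 1 ^ (m + 1)) * u 1) := by
        rw [u2_pow_u3.mul_left_comm, pow_succ (u 1)]
        simp only [smul_mul_assoc, mul_assoc]
      _ = _ := by
        rw [hw', mul_smul_comm, smul_mul_assoc, smul_smul, ← zpow_add₀ hq]
        ring_nf
  have tail : u 2 ^ (n + 1) * (minor₁ q u * (u 2 * w)) * u 1 ^ (m + 2) =
      q ^ i • (minor₁ q u * (u 2 * (u 2 * minorSum q u m n * u 1 * u 1))) := by
    rw [u2_pow_minor₁.mul_left_comm, zpow_zero, one_smul, ← mul_smul_comm, ← mul_smul_comm,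
      ← smul_mul_assoc, ← smul_mul_assoc, ← mul_smul_comm, ← hw, pow_succ (u 1) (m + 1),
      pow_succ (u 1) m, ← mul_assoc (u 2 ^ (n + 1)), ← pow_succ, pow_succ' (u 2) (n + 1),
      pow_succ' (u 2) n]
    simp only [mul_assoc]
  rw [h.minorSum_add_two_left hq hord hnm, mul_sub, sub_mul, mul_smul_comm, mul_smul_comm,
    smul_mul_assoc, smul_mul_assoc, head, tail]
  simp only [smul_sub, smul_smul, ← zpow_add₀ hq]
  ring_nf

theorem conj_step_right (h : StraighteningRelations q u) (hq : q ≠ 0) (hord : ¬IsOfFinOrder q)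
    {m n : ℕ} (hmn : m ≤ n + 1) {i j : ℤ} (k : ℤ) {w w' : R}
    (hw : u 2 ^ n * w * u 1 ^ m = q ^ i • minorSum q u m n)
    (hw' : u 2 ^ (n + 1) * w' * u 1 ^ (m + 1) = q ^ j • minorSum q u (m + 1) (n + 1)) :
    u 2 ^ (n + 2) * (q ^ (k - j + 2 * (m - n)) • (w' * u 0) -
        q ^ (k - i + 2 * m + 4) • (w * u 1 * minor₀ q u)) * u 1 ^ (m + 1) =
      q ^ k • minorSum q u (m + 1) (n + 2) := by
  have flip : ∀ {m n : ℕ} {e : ℤ} {x : R}, u 2 ^ n * x * u 1 ^ m = q ^ e • minorSum q u m n →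
      op (u 1) ^ m * op x * op (u 2) ^ n =
        q ^ e • minorSum q (fun i => op (u i.rev)) n m := fun hx => by
    rw [minorSum_op_rev, ← op_smul, ← hx, op_mul, op_mul, op_pow, op_pow, mul_assoc]
  have := h.op_rev.conj_step_left hq hord hmn k (flip hw) (flip hw')
  simp only [minorSum_op_rev, minor₁_op_rev] at this
  rw [← op_inj, op_smul, ← this]
  simp only [op_sub, op_smul, op_mul, op_pow, mul_assoc]
  rfl

theorem conj_candidates (h : StraighteningRelations q u) (hq : q ≠ 0) (hord : ¬IsOfFinOrder q)
    (n : ℕ) :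
    u 2 ^ n * diagCandidate q u n * u 1 ^ n = q ^ (n * (n - 3) : ℤ) • minorSum q u n n ∧
      u 2 ^ n * offDiagCandidate q u n * u 1 ^ (n + 1) =
        q ^ (n * (n - 2) : ℤ) • minorSum q u (n + 1) n ∧
      u 2 ^ (n + 1) * diagCandidate q u (n + 1) * u 1 ^ (n + 1) =
        q ^ ((n + 1) * (n - 2) : ℤ) • minorSum q u (n + 1) (n + 1) := by
  induction n with
  | zero =>
    simp [diagCandidate, offDiagCandidate, minorSum_zero_zero, minorSum_one_zero hq hord,
      h.minorSum_one_one hq hord, smul_smul, hq]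
  | succ n ih =>
    obtain ⟨diag, offDiag, diag_succ⟩ := ih
    have offDiag_succ : u 2 ^ (n + 1) * offDiagCandidate q u (n + 1) * u 1 ^ (n + 2) =
        q ^ ((n + 1) * (n - 1) : ℤ) • minorSum q u (n + 2) (n + 1) := by
      convert h.conj_step_left hq hord n.le_succ ((n + 1) * (n - 1)) diag diag_succ using 3
      rw [offDiagCandidate]
      ring_nf
    refine ⟨?_, ?_, ?_⟩
    · convert diag_succ using 3; push_cast; ring
    · convert offDiag_succ using 3; push_cast; ring
    · convert h.conj_step_right hq hord le_rfl ((n + 2) * (n - 1)) offDiag offDiag_succ using 3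
      · rw [diagCandidate]
        push_cast
        ring_nf
      · push_cast; ring_nf

end StraighteningRelations

end Candidates

/-! ### The PBW basis -/

section PBW

open MulOpposite

variable {K R : Type*} [Field K] [Ring R] [Algebra K R] {q : K} {u : Fin 4 → R}

/-- The ordered monomial `u₃^{a₃} u₂^{a₂} u₁^{a₁} u₀^{a₀}`. -/
def pbwMonomial (u : Fin 4 → R) (a : Idx) : R :=
  u 3 ^ a.1 * u 2 ^ a.2.1 * u 1 ^ a.2.2.1 * u 0 ^ a.2.2.2

/-- The dual PBW element `E[a] = q^{b(a)} u₃^{a₃} u₂^{a₂} u₁^{a₁} u₀^{a₀}`. -/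
def dualPBW (q : K) (u : Fin 4 → R) (a : Idx) : R := q ^ bexp a • pbwMonomial u a

theorem u3_mul_pbwMonomial (a3 a2 a1 a0 : ℕ) :
    u 3 * pbwMonomial u (a3, a2, a1, a0) = pbwMonomial u (a3 + 1, a2, a1, a0) := by
  simp only [pbwMonomial, pow_succ' (u 3), mul_assoc]

theorem pbwMonomial_op_rev (a3 a2 a1 a0 : ℕ) :
    pbwMonomial (fun i => op (u i.rev)) (a3, a2, a1, a0) =
      op (pbwMonomial u (a0, a1, a2, a3)) := by
  simp only [pbwMonomial, op_mul, op_pow, mul_assoc]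
  rfl

theorem dualPBW_op_rev (a3 a2 a1 a0 : ℕ) :
    dualPBW q (fun i => op (u i.rev)) (a3, a2, a1, a0) = op (dualPBW q u (a0, a1, a2, a3)) := by
  rw [dualPBW, dualPBW, pbwMonomial_op_rev, op_smul]
  congr 2
  simp only [bexp]
  ring

theorem mul_mem_span_pbwMonomial {x y : R}
    (hx : ∀ a, x * pbwMonomial u a ∈ Submodule.span K (Set.range (pbwMonomial u)))
    (hy : y ∈ Submodule.span K (Set.range (pbwMonomial u))) :
    x * y ∈ Submodule.span K (Set.range (pbwMonomial u)) :=
  (Submodule.span_le (p := (Submodule.span K _).comap (LinearMap.mulLeft K x))).2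
    (Set.forall_mem_range.2 hx) hy

theorem u3_mul_pbwMonomial_mem_span (a : Idx) :
    u 3 * pbwMonomial u a ∈ Submodule.span K (Set.range (pbwMonomial u)) :=
  Submodule.subset_span ⟨_, (u3_mul_pbwMonomial _ _ _ _).symm⟩

theorem linearIndependent_dualPBW (hq : q ≠ 0) (hli : LinearIndependent K (pbwMonomial u)) :
    LinearIndependent K (dualPBW q u) := by
  convert hli.units_smul fun a => Units.mk0 q hq ^ bexp a using 1
  funext a
  simp [dualPBW, Units.smul_def]

namespace StraighteningRelations

theorem u2_pow_mul_pbwMonomial_mul_u1_pow (h : StraighteningRelations q u) (hq : q ≠ 0)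
    (n m a3 a2 a1 a0 : ℕ) :
    u 2 ^ n * pbwMonomial u (a3, a2, a1, a0) * u 1 ^ m =
      q ^ (-2 * n * a3 - 2 * m * a0 : ℤ) • pbwMonomial u (a3, a2 + n, a1 + m, a0) := by
  have comm23 : QComm q (-2 * n * a3) (u 2 ^ n) (u 3 ^ a3) :=
    ((QComm.pow_left hq h.mul23 n).pow_right hq a3).congr (by ring)
  have comm01 : QComm q (-2 * m * a0) (u 0 ^ a0) (u 1 ^ m) :=
    ((QComm.pow_left hq h.mul01 a0).pow_right hq m).congr (by ring)
  simp only [pbwMonomial, mul_assoc]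
  rw [comm01, comm23.mul_left_comm, add_comm a2 n, pow_add, pow_add, sub_eq_add_neg, zpow_add₀ hq]
  simp only [mul_smul_comm, smul_smul, mul_assoc, neg_mul]

theorem u2_mul_pbwMonomial_mem_span (h : StraighteningRelations q u) (hq : q ≠ 0) (a : Idx) :
    u 2 * pbwMonomial u a ∈ Submodule.span K (Set.range (pbwMonomial u)) := by
  have := h.u2_pow_mul_pbwMonomial_mul_u1_pow hq 1 0 a.1 a.2.1 a.2.2.1 a.2.2.2
  rw [pow_one, pow_zero, mul_one] at this
  exact this ▸ Submodule.smul_mem _ _ (Submodule.subset_span ⟨_, rfl⟩)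

theorem u1_mul_pbwMonomial_mem_span (h : StraighteningRelations q u) (hq : q ≠ 0) (a : Idx) :
    u 1 * pbwMonomial u a ∈ Submodule.span K (Set.range (pbwMonomial u)) := by
  obtain ⟨a3, a2, a1, a0⟩ := a
  induction a3 with
  | zero =>
    have comm : QComm q (a2 * -2) (u 1) (u 2 ^ a2) := QComm.pow_right hq h.mul12 a2
    have : u 1 * pbwMonomial u (0, a2, a1, a0) =
        q ^ (a2 * -2 : ℤ) • pbwMonomial u (0, a2, a1 + 1, a0) := by
      simp only [pbwMonomial, pow_zero, one_mul, mul_assoc, comm.mul_left_comm, pow_succ' (u 1)]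
    exact this ▸ Submodule.smul_mem _ _ (Submodule.subset_span ⟨_, rfl⟩)
  | succ a3 ih =>
    rw [← u3_mul_pbwMonomial, ← mul_assoc, h.mul13, add_mul, smul_mul_assoc, smul_mul_assoc,
      mul_assoc, mul_assoc]
    exact Submodule.add_mem _
      (Submodule.smul_mem _ _ (mul_mem_span_pbwMonomial u3_mul_pbwMonomial_mem_span ih))
      (Submodule.smul_mem _ _ (mul_mem_span_pbwMonomial (h.u2_mul_pbwMonomial_mem_span hq)
        (h.u2_mul_pbwMonomial_mem_span hq _)))

theorem u0_mul_pbwMonomial_mem_span (h : StraighteningRelations q u) (hq : q ≠ 0) (a : Idx) :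
    u 0 * pbwMonomial u a ∈ Submodule.span K (Set.range (pbwMonomial u)) := by
  have u1_mul_mem {x} := mul_mem_span_pbwMonomial (y := x) (h.u1_mul_pbwMonomial_mem_span hq)
  have u2_mul_mem {x} := mul_mem_span_pbwMonomial (y := x) (h.u2_mul_pbwMonomial_mem_span hq)
  obtain ⟨a3, a2, a1, a0⟩ := a
  induction a3 with
  | zero =>
    induction a2 with
    | zero =>
      have comm : QComm q (a1 * -2) (u 0) (u 1 ^ a1) := QComm.pow_right hq h.mul01 a1
      have : u 0 * pbwMonomial u (0, 0, a1, a0) =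
          q ^ (a1 * -2 : ℤ) • pbwMonomial u (0, 0, a1, a0 + 1) := by
        simp only [pbwMonomial, pow_zero, one_mul, comm.mul_left_comm, pow_succ' (u 0)]
      exact this ▸ Submodule.smul_mem _ _ (Submodule.subset_span ⟨_, rfl⟩)
    | succ a2 ih =>
      have : pbwMonomial u (0, a2 + 1, a1, a0) = u 2 * pbwMonomial u (0, a2, a1, a0) := by
        simp only [pbwMonomial, pow_zero, one_mul, pow_succ' (u 2), mul_assoc]
      rw [this, ← mul_assoc, h.mul02, add_mul, smul_mul_assoc, smul_mul_assoc, mul_assoc,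
        mul_assoc]
      exact Submodule.add_mem _ (Submodule.smul_mem _ _ (u2_mul_mem ih))
        (Submodule.smul_mem _ _ (u1_mul_mem (h.u1_mul_pbwMonomial_mem_span hq _)))
  | succ a3 ih =>
    rw [← u3_mul_pbwMonomial, ← mul_assoc, h.mul03, add_mul, smul_mul_assoc, smul_mul_assoc,
      mul_assoc, mul_assoc]
    exact Submodule.add_mem _
      (Submodule.smul_mem _ _ (mul_mem_span_pbwMonomial u3_mul_pbwMonomial_mem_span ih))
      (Submodule.smul_mem _ _ (u2_mul_mem (h.u1_mul_pbwMonomial_mem_span hq _)))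

theorem span_pbwMonomial_eq_top (h : StraighteningRelations q u) (hq : q ≠ 0)
    (hgen : Algebra.adjoin K (Set.range u) = ⊤) :
    Submodule.span K (Set.range (pbwMonomial u)) = ⊤ := by
  have gen_mul_mem : ∀ i a, u i * pbwMonomial u a ∈ Submodule.span K (Set.range (pbwMonomial u)) :=
    fun i => by
      fin_cases i
      · exact h.u0_mul_pbwMonomial_mem_span hq
      · exact h.u1_mul_pbwMonomial_mem_span hq
      · exact h.u2_mul_pbwMonomial_mem_span hq
      · exact u3_mul_pbwMonomial_mem_span
  have mul_mem : ∀ x : R, ∀ y ∈ Submodule.span K (Set.range (pbwMonomial u)),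
      x * y ∈ Submodule.span K (Set.range (pbwMonomial u)) := fun x => by
    have hx : x ∈ Algebra.adjoin K (Set.range u) := hgen ▸ Algebra.mem_top
    induction hx using Algebra.adjoin_induction with
    | mem x hx =>
      obtain ⟨i, rfl⟩ := hx
      exact fun y => mul_mem_span_pbwMonomial (gen_mul_mem i)
    | algebraMap c =>
      exact fun y hy => Algebra.smul_def c y ▸ Submodule.smul_mem _ c hy
    | add x x' _ _ ihx ihx' =>
      exact fun y hy => add_mul x x' y ▸ Submodule.add_mem _ (ihx y hy) (ihx' y hy)
    | mul x x' _ _ ihx ihx' => exact fun y hy => mul_assoc x x' y ▸ ihx _ (ihx' y hy)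
  have one_mem : (1 : R) ∈ Submodule.span K (Set.range (pbwMonomial u)) :=
    Submodule.subset_span ⟨(0, 0, 0, 0), by simp [pbwMonomial]⟩
  exact Submodule.eq_top_iff'.2 fun x => mul_one x ▸ mul_mem x 1 one_mem

theorem u2_pow_mul_mul_u1_pow_injective (h : StraighteningRelations q u) (hq : q ≠ 0)
    (hgen : Algebra.adjoin K (Set.range u) = ⊤) (hli : LinearIndependent K (pbwMonomial u))
    (n m : ℕ) : Function.Injective fun x => u 2 ^ n * x * u 1 ^ m := by
  let f : R →ₗ[K] R := (LinearMap.mulRight K (u 1 ^ m)).comp (LinearMap.mulLeft K (u 2 ^ n))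
  let shift : Idx → Idx := fun a => (a.1, a.2.1 + n, a.2.2.1 + m, a.2.2.2)
  have shift_injective : Function.Injective shift := by
    rintro ⟨a3, a2, a1, a0⟩ ⟨b3, b2, b1, b0⟩ hab
    simpa [shift] using hab
  have hli_image : LinearIndependent K (f ∘ pbwMonomial u) := by
    convert (hli.comp shift shift_injective).units_smul
      (fun a => (Units.mk0 q hq) ^ (-2 * n * a.1 - 2 * m * a.2.2.2 : ℤ)) using 1
    funext a
    simpa [f, shift, Units.smul_def] using
      h.u2_pow_mul_pbwMonomial_mul_u1_pow hq n m a.1 a.2.1 a.2.2.1 a.2.2.2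
  have f_injOn := LinearMap.injOn_of_disjoint_ker subset_rfl
    (Submodule.range_ker_disjoint hli_image)
  rw [h.span_pbwMonomial_eq_top hq hgen] at f_injOn
  exact Set.injOn_univ.1 f_injOn

theorem span_dualPBW_eq_top (h : StraighteningRelations q u) (hq : q ≠ 0)
    (hgen : Algebra.adjoin K (Set.range u) = ⊤) :
    Submodule.span K (Set.range (dualPBW q u)) = ⊤ := by
  rw [eq_top_iff, ← h.span_pbwMonomial_eq_top hq hgen, Submodule.span_le]
  rintro _ ⟨a, rfl⟩
  rw [← inv_smul_smul₀ (pow_ne_zero (bexp a) hq) (pbwMonomial u a)]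
  exact Submodule.smul_mem _ _ (Submodule.subset_span ⟨a, rfl⟩)

/-- The dual PBW elements as a basis of the algebra generated by `u`. -/
def dualPBWBasis (h : StraighteningRelations q u) (hq : q ≠ 0)
    (hgen : Algebra.adjoin K (Set.range u) = ⊤) (hli : LinearIndependent K (pbwMonomial u)) :
    Module.Basis Idx K R :=
  .mk (linearIndependent_dualPBW hq hli) (h.span_dualPBW_eq_top hq hgen).ge

theorem coe_dualPBWBasis (h : StraighteningRelations q u) (hq : q ≠ 0)
    (hgen : Algebra.adjoin K (Set.range u) = ⊤) (hli : LinearIndependent K (pbwMonomial u)) :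
    ⇑(h.dualPBWBasis hq hgen hli) = dualPBW q u :=
  Module.Basis.coe_mk _ _

end StraighteningRelations

end PBW

section DualPBWMultiplication

open MulOpposite

variable {K R : Type*} [Field K] [Ring R] [Algebra K R] {q : K} {u : Fin 4 → R}

theorem dualPBW_eq_zpow_smul (q : K) (u : Fin 4 → R) (a : Idx) :
    dualPBW q u a = q ^ (bexp a : ℤ) • pbwMonomial u a := by
  rw [dualPBW, zpow_natCast]

theorem zpow_smul_pbwMonomial (hq : q ≠ 0) {a : Idx} {z w : ℤ} (hzw : z = w + bexp a) :
    q ^ z • pbwMonomial u a = q ^ w • dualPBW q u a := by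
  rw [dualPBW_eq_zpow_smul, smul_smul, ← zpow_add₀ hq, hzw]

theorem choose_succ_two (m : ℕ) : (m + 1).choose 2 = m + m.choose 2 := by
  rw [Nat.choose_succ_succ', Nat.choose_one_right]

theorem u3_mul_dualPBW (hq : q ≠ 0) (a3 a2 a1 a0 : ℕ) :
    u 3 * dualPBW q u (a3, a2, a1, a0) =
      q ^ (-a3 : ℤ) • dualPBW q u (a3 + 1, a2, a1, a0) := by
  rw [dualPBW_eq_zpow_smul, mul_smul_comm, u3_mul_pbwMonomial]
  refine zpow_smul_pbwMonomial hq ?_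
  simp only [bexp, choose_succ_two]
  push_cast
  ring

namespace StraighteningRelations

theorem u2_mul_dualPBW (h : StraighteningRelations q u) (hq : q ≠ 0) (a3 a2 a1 a0 : ℕ) :
    u 2 * dualPBW q u (a3, a2, a1, a0) =
      q ^ (-2 * a3 - a2 : ℤ) • dualPBW q u (a3, a2 + 1, a1, a0) := by
  have := h.u2_pow_mul_pbwMonomial_mul_u1_pow hq 1 0 a3 a2 a1 a0
  rw [pow_one, pow_zero, mul_one] at this
  rw [dualPBW_eq_zpow_smul, mul_smul_comm, this, smul_smul, ← zpow_add₀ hq]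
  refine zpow_smul_pbwMonomial hq ?_
  simp only [bexp, add_zero, choose_succ_two]
  push_cast
  ring

theorem minor₁_mul_pbwMonomial (h : StraighteningRelations q u) (hq : q ≠ 0)
    (a3 a2 a1 a0 : ℕ) :
    minor₁ q u * pbwMonomial u (a3, a2, a1, a0) =
      q ^ (-2 * a3 - 2 * a2 : ℤ) • pbwMonomial u (a3 + 1, a2, a1 + 1, a0) -
        q ^ (-2 * a3 + 2 : ℤ) • pbwMonomial u (a3, a2 + 2, a1, a0) := by
  have comm3 : QComm q (a3 * -2) (minor₁ q u) (u 3 ^ a3) := (h.minor₁_u3 hq).pow_right hq a3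
  have comm2 : QComm q (a2 * -2) (u 1) (u 2 ^ a2) := QComm.pow_right hq h.mul12 a2
  simp only [pbwMonomial, mul_assoc, comm3.mul_left_comm]
  rw [minor₁, sub_mul, mul_assoc (u 3), comm2.mul_left_comm, pow_succ (u 3), pow_succ' (u 1),
    add_comm a2 2, pow_add (u 2)]
  simp only [mul_smul_comm, smul_mul_assoc, smul_smul, mul_assoc, mul_sub, smul_sub,
    ← zpow_natCast q 2, ← zpow_add₀ hq]
  congr 3 <;> push_cast <;> ring

theorem minor₁_mul_dualPBW (h : StraighteningRelations q u) (hq : q ≠ 0) (a3 a2 a1 a0 : ℕ) :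
    minor₁ q u * dualPBW q u (a3, a2, a1, a0) =
      q ^ (-3 * a3 - 2 * a2 - a1 : ℤ) • dualPBW q u (a3 + 1, a2, a1 + 1, a0) -
        q ^ (-2 * a3 - 2 * a2 + 1 : ℤ) • dualPBW q u (a3, a2 + 2, a1, a0) := by
  rw [dualPBW_eq_zpow_smul, mul_smul_comm, h.minor₁_mul_pbwMonomial hq, smul_sub, smul_smul,
    smul_smul, ← zpow_add₀ hq, ← zpow_add₀ hq]
  congr 1 <;> refine zpow_smul_pbwMonomial hq ?_ <;> simp only [bexp, choose_succ_two] <;>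
    push_cast <;> ring

end StraighteningRelations

end DualPBWMultiplication

/-! ### The triangular order and leading terms -/

section TriangularOrder

variable {a b c : Idx}

theorem tri_refl (a : Idx) : tri a a := ⟨0, 0, by simp⟩

theorem tri_trans (hab : tri a b) (hbc : tri b c) : tri a c := by
  obtain ⟨s, r, h1, h2, h3, h4⟩ := hab
  obtain ⟨s', r', h1', h2', h3', h4'⟩ := hbc
  refine ⟨s + s', r + r', ?_, ?_, ?_, ?_⟩ <;> push_cast <;> omega

theorem mem_Sset_iff : b ∈ Sset a ↔ ∃ s r : ℕ, 0 < s + r ∧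
    (b.1 : ℤ) = a.1 - s ∧ (b.2.1 : ℤ) = a.2.1 + 2 * s - r ∧
      (b.2.2.1 : ℤ) = a.2.2.1 - s + 2 * r ∧ (b.2.2.2 : ℤ) = a.2.2.2 - r := by
  constructor
  · rintro ⟨⟨s, r, h1, h2, h3, h4⟩, hne⟩
    refine ⟨s, r, Nat.pos_of_ne_zero fun hsr => hne ?_, h1, h2, h3, h4⟩
    simp only [Prod.ext_iff]
    omega
  · rintro ⟨s, r, hsr, h1, h2, h3, h4⟩
    refine ⟨⟨s, r, h1, h2, h3, h4⟩, ?_⟩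
    rintro rfl
    omega

theorem add_lt_add_of_mem_Sset (h : b ∈ Sset a) : b.1 + b.2.2.2 < a.1 + a.2.2.2 := by
  obtain ⟨s, r, hsr, h1, -, -, h4⟩ := mem_Sset_iff.1 h
  omega

theorem Sset_subset_Sset (h : b ∈ Sset a) : Sset b ⊆ Sset a := by
  refine fun c hc => ⟨tri_trans h.1 hc.1, ?_⟩
  rintro rfl
  exact (add_lt_add_of_mem_Sset h).not_gt (add_lt_add_of_mem_Sset hc)

theorem Nnum_eq_of_mem_Sset (h : b ∈ Sset a) : Nnum b = Nnum a := by
  obtain ⟨⟨s, r, h1, h2, h3, h4⟩, -⟩ := h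
  rw [Nnum, Nnum, h1, h2, h3, h4]
  ring

theorem mem_Sset_rev {a3 a2 a1 a0 b3 b2 b1 b0 : ℕ} (h : (b3, b2, b1, b0) ∈ Sset (a3, a2, a1, a0)) :
    (b0, b1, b2, b3) ∈ Sset (a0, a1, a2, a3) := by
  obtain ⟨s, r, hsr, h1, h2, h3, h4⟩ := mem_Sset_iff.1 h
  exact mem_Sset_iff.2 ⟨r, s, add_comm s r ▸ hsr, h4, by linarith, by linarith, h1⟩

end TriangularOrder

section QLattice

variable {ι K M N : Type*} [Field K] [AddCommGroup M] [Module K M] [AddCommGroup N] [Module K N]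
  {q : K} {E : ι → M} {z₀ : ℤ} {S : Set ι} {x : M}

/-- The additive group `Σ_{b ∈ S} q^{z₀} ℤ[q] E[b]`. -/
def qLattice (q : K) (E : ι → M) (z₀ : ℤ) (S : Set ι) : AddSubgroup M :=
  .closure {x | ∃ z ≥ z₀, ∃ b ∈ S, q ^ z • E b = x}

theorem zpow_smul_mem_qLattice {z : ℤ} (hz : z₀ ≤ z) {b : ι} (hb : b ∈ S) :
    q ^ z • E b ∈ qLattice q E z₀ S :=
  AddSubgroup.subset_closure ⟨z, hz, b, hb, rfl⟩

theorem map_mem_of_mem_qLattice (f : M →ₗ[K] N) {G : AddSubgroup N}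
    (hf : ∀ z ≥ z₀, ∀ b ∈ S, q ^ z • f (E b) ∈ G) (hx : x ∈ qLattice q E z₀ S) : f x ∈ G := by
  refine (AddSubgroup.closure_le (G.comap f.toAddMonoidHom)).2 ?_ hx
  rintro _ ⟨z, hz, b, hb, rfl⟩
  simpa using hf z hz b hb

theorem qLattice_mono {z₁ : ℤ} (hz : z₀ ≤ z₁) {T : Set ι} (hTS : T ⊆ S) :
    qLattice q E z₁ T ≤ qLattice q E z₀ S :=
  AddSubgroup.closure_mono fun _ ⟨z, hz', b, hb, hx⟩ => ⟨z, hz.trans hz', b, hTS hb, hx⟩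

theorem mem_span_of_mem_qLattice (hx : x ∈ qLattice q E z₀ S) : x ∈ Submodule.span K (E '' S) :=
  map_mem_of_mem_qLattice LinearMap.id (G := (Submodule.span K (E '' S)).toAddSubgroup)
    (fun _ _ b hb => Submodule.smul_mem _ _ (Submodule.subset_span ⟨b, hb, rfl⟩)) hx

end QLattice

section LeadingTerm

open MulOpposite

variable {K R : Type*} [Field K] [Ring R] [Algebra K R] {q : K} {u : Fin 4 → R} {a : Idx} {x : R}

/-- `x ∈ E[a] + Σ_{b ∈ S(a)} qℤ[q] E[b]`. -/
def HasLeadingTerm (q : K) (u : Fin 4 → R) (a : Idx) (x : R) : Prop :=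
  x - dualPBW q u a ∈ qLattice q (dualPBW q u) 1 (Sset a)

namespace HasLeadingTerm

theorem mem_qLattice (hx : HasLeadingTerm q u a x) :
    x ∈ qLattice q (dualPBW q u) 0 {b | tri a b} := by
  have leading : dualPBW q u a ∈ qLattice q (dualPBW q u) 0 {b | tri a b} := by
    simpa using zpow_smul_mem_qLattice (q := q) (E := dualPBW q u) (S := {b | tri a b})
      (le_refl 0) (tri_refl a)
  simpa using add_mem (qLattice_mono zero_le_one (fun _ hb => hb.1) hx) leading

theorem op_rev_iff {a3 a2 a1 a0 : ℕ} :
    HasLeadingTerm q (fun i => op (u i.rev)) (a0, a1, a2, a3) (op x) ↔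
      HasLeadingTerm q u (a3, a2, a1, a0) x := by
  rw [HasLeadingTerm, HasLeadingTerm, dualPBW_op_rev, ← op_sub]
  constructor <;> intro hx
  · refine map_mem_of_mem_qLattice (opLinearEquiv K).symm.toLinearMap ?_ hx
    rintro z hz ⟨b3, b2, b1, b0⟩ hb
    rw [dualPBW_op_rev]
    exact zpow_smul_mem_qLattice hz (mem_Sset_rev hb)
  · refine map_mem_of_mem_qLattice (opLinearEquiv K).toLinearMap ?_ hx
    rintro z hz ⟨b3, b2, b1, b0⟩ hb
    rw [LinearEquiv.coe_coe, coe_opLinearEquiv, ← dualPBW_op_rev]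
    exact zpow_smul_mem_qLattice hz (mem_Sset_rev hb)

end HasLeadingTerm

namespace StraighteningRelations

theorem hasLeadingTerm_step_left (h : StraighteningRelations q u) (hq : q ≠ 0) {m k : ℕ}
    (hmk : m ≤ k) {w w' : R} (hw' : HasLeadingTerm q u (m + 1, 0, 0, k + 1) w')
    (hw : HasLeadingTerm q u (m, 0, 0, k) w) :
    HasLeadingTerm q u (m + 2, 0, 0, k + 1)
      (q ^ (m + 1 : ℤ) • (u 3 * w') - q ^ (4 * m + k + 3 : ℤ) • (minor₁ q u * (u 2 * w))) := by
  have leading : q ^ (m + 1 : ℤ) • (u 3 * dualPBW q u (m + 1, 0, 0, k + 1)) =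
      dualPBW q u (m + 2, 0, 0, k + 1) := by
    rw [u3_mul_dualPBW hq, smul_smul, ← zpow_add₀ hq]
    simp
  have mem_left : q ^ (m + 1 : ℤ) • (u 3 * (w' - dualPBW q u (m + 1, 0, 0, k + 1))) ∈
      qLattice q (dualPBW q u) 1 (Sset (m + 2, 0, 0, k + 1)) := by
    refine map_mem_of_mem_qLattice (q ^ (m + 1 : ℤ) • LinearMap.mulLeft K (u 3)) ?_ hw'
    rintro z hz ⟨b3, b2, b1, b0⟩ hb
    obtain ⟨s, r, hsr, h1, h2, h3, h4⟩ := mem_Sset_iff.1 hb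
    simp only at h1 h2 h3 h4
    simp only [LinearMap.smul_apply, LinearMap.mulLeft_apply, u3_mul_dualPBW hq, smul_smul,
      ← zpow_add₀ hq]
    refine zpow_smul_mem_qLattice ?_ (mem_Sset_iff.2 ⟨s, r, hsr, ?_, ?_, ?_, ?_⟩) <;>
      push_cast <;> omega
  have mem_right : q ^ (4 * m + k + 3 : ℤ) • (minor₁ q u * (u 2 * w)) ∈
      qLattice q (dualPBW q u) 1 (Sset (m + 2, 0, 0, k + 1)) := by
    refine map_mem_of_mem_qLattice (q ^ (4 * m + k + 3 : ℤ) •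
      LinearMap.mulLeft K (minor₁ q u) ∘ₗ LinearMap.mulLeft K (u 2)) ?_ hw.mem_qLattice
    rintro z hz ⟨b3, b2, b1, b0⟩ ⟨s, r, h1, h2, h3, h4⟩
    simp only at h1 h2 h3 h4
    simp only [LinearMap.smul_apply, LinearMap.comp_apply, LinearMap.mulLeft_apply,
      h.u2_mul_dualPBW hq, mul_smul_comm, h.minor₁_mul_dualPBW hq, smul_sub, smul_smul,
      ← zpow_add₀ hq]
    refine sub_mem
      (zpow_smul_mem_qLattice ?_ (mem_Sset_iff.2 ⟨s + 1, r + 1, by omega, ?_, ?_, ?_, ?_⟩))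
      (zpow_smul_mem_qLattice ?_ (mem_Sset_iff.2 ⟨s + 2, r + 1, by omega, ?_, ?_, ?_, ?_⟩)) <;>
      push_cast <;> omega
  rw [HasLeadingTerm, ← leading, sub_right_comm, ← smul_sub, ← mul_sub]
  exact sub_mem mem_left mem_right

theorem hasLeadingTerm_step_right (h : StraighteningRelations q u) (hq : q ≠ 0) {m k : ℕ}
    (hkm : k ≤ m) {x x' : R} (hx' : HasLeadingTerm q u (m + 1, 0, 0, k + 1) x')
    (hx : HasLeadingTerm q u (m, 0, 0, k) x) :
    HasLeadingTerm q u (m + 1, 0, 0, k + 2)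
      (q ^ (k + 1 : ℤ) • (x' * u 0) - q ^ (4 * k + m + 3 : ℤ) • (x * u 1 * minor₀ q u)) :=
  HasLeadingTerm.op_rev_iff.1 <| h.op_rev.hasLeadingTerm_step_left hq hkm
    (HasLeadingTerm.op_rev_iff.2 hx') (HasLeadingTerm.op_rev_iff.2 hx)

theorem hasLeadingTerm_candidates (h : StraighteningRelations q u) (hq : q ≠ 0) (n : ℕ) :
    HasLeadingTerm q u (n, 0, 0, n) (diagCandidate q u n) ∧
      HasLeadingTerm q u (n + 1, 0, 0, n) (offDiagCandidate q u n) ∧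
        HasLeadingTerm q u (n + 1, 0, 0, n + 1) (diagCandidate q u (n + 1)) := by
  induction n with
  | zero =>
    have mem : q ^ (2 : ℤ) • dualPBW q u (0, 1, 1, 0) ∈
        qLattice q (dualPBW q u) 1 (Sset (0 + 1, 0, 0, 0 + 1)) :=
      zpow_smul_mem_qLattice (by norm_num) (mem_Sset_iff.2 ⟨1, 1, by simp⟩)
    refine ⟨?_, ?_, ?_⟩
    · simp [HasLeadingTerm, diagCandidate, dualPBW, pbwMonomial, bexp]
    · simp [HasLeadingTerm, offDiagCandidate, dualPBW, pbwMonomial, bexp]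
    · simpa [HasLeadingTerm, diagCandidate, dualPBW, pbwMonomial, bexp] using neg_mem mem
  | succ n ih =>
    obtain ⟨hdiag, hoff, hdiag'⟩ := ih
    have hoff' : HasLeadingTerm q u (n + 2, 0, 0, n + 1) (offDiagCandidate q u (n + 1)) := by
      convert h.hasLeadingTerm_step_left hq le_rfl hdiag' hdiag using 1
      rw [offDiagCandidate]
      congr 3
      ring
    refine ⟨hdiag', hoff', ?_⟩
    convert h.hasLeadingTerm_step_right hq n.le_succ hoff' hoff using 1
    rw [diagCandidate]
    congr 3
    push_cast
    ring

end StraighteningRelations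

end LeadingTerm

/-! ### The dual bar involution -/

section DualBarInvolution

variable {K R : Type*} [Field K] [Ring R] [Algebra K R] {q : K} {u : Fin 4 → R} {bar : K →+* K}
  {σ : R →ₛₗ[bar] R} {e f a : ℤ} {x y : R}

/-- The defining properties of the dual bar involution `σ`: it is an injective anti-multiplicative
map, semilinear over `q ↦ q⁻¹`, with `σ uᵢ = q^{2i} uᵢ`. -/
structure IsDualBarInvolution (q : K) (u : Fin 4 → R) (σ : R →ₛₗ[bar] R) : Prop where
  bar_q : bar q = q⁻¹
  injective : Function.Injective σ
  map_one : σ 1 = 1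
  map_mul : ∀ x y, σ (x * y) = σ y * σ x
  map_u0 : σ (u 0) = u 0
  map_u1 : σ (u 1) = q ^ (2 : ℤ) • u 1
  map_u2 : σ (u 2) = q ^ (4 : ℤ) • u 2
  map_u3 : σ (u 3) = q ^ (6 : ℤ) • u 3

namespace IsDualBarInvolution

theorem bar_zpow (hσ : IsDualBarInvolution q u σ) (z : ℤ) : bar (q ^ z) = q ^ (-z) := by
  rw [map_zpow₀, hσ.bar_q, inv_zpow']

theorem map_pow (hσ : IsDualBarInvolution q u σ) (hq : q ≠ 0) (hx : σ x = q ^ e • x) (n : ℕ) :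
    σ (x ^ n) = q ^ (n * e) • x ^ n := by
  induction n with
  | zero => simpa using hσ.map_one
  | succ n ih =>
    rw [pow_succ', hσ.map_mul, ih, hx, smul_mul_smul_comm, ← pow_succ, ← pow_succ',
      ← zpow_add₀ hq, Nat.cast_succ, add_one_mul]

theorem map_mul_of_qComm (hσ : IsDualBarInvolution q u σ) (hq : q ≠ 0) (hx : σ x = q ^ e • x)
    (hy : σ y = q ^ f • y) (hyx : QComm q a y x) : σ (x * y) = q ^ (e + f + a) • (x * y) := by
  rw [hσ.map_mul, hx, hy, smul_mul_smul_comm, hyx, smul_smul, zpow_add₀ hq, zpow_add₀ hq,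
    mul_comm (q ^ f)]

theorem map_u2_pow_mul_mul_u1_pow (hσ : IsDualBarInvolution q u σ) (hq : q ≠ 0) (m n : ℕ) (x : R) :
    σ (u 2 ^ n * x * u 1 ^ m) = q ^ (2 * m + 4 * n : ℤ) • (u 1 ^ m * σ x * u 2 ^ n) := by
  rw [hσ.map_mul, hσ.map_mul, hσ.map_pow hq hσ.map_u1, hσ.map_pow hq hσ.map_u2, ← mul_assoc]
  simp only [mul_smul_comm, smul_mul_assoc, smul_smul, ← zpow_add₀ hq]
  ring_nf

theorem map_u1_pow_mul_mul_u2_pow (hσ : IsDualBarInvolution q u σ) (hq : q ≠ 0) (m n : ℕ) (x : R) :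
    σ (u 1 ^ m * x * u 2 ^ n) = q ^ (2 * m + 4 * n : ℤ) • (u 2 ^ n * σ x * u 1 ^ m) := by
  rw [hσ.map_mul, hσ.map_mul, hσ.map_pow hq hσ.map_u1, hσ.map_pow hq hσ.map_u2, ← mul_assoc]
  simp only [mul_smul_comm, smul_mul_assoc, smul_smul, ← zpow_add₀ hq]
  ring_nf

theorem u1_pow_mul_mul_u2_pow_injective (hσ : IsDualBarInvolution q u σ) (hq : q ≠ 0) {m n : ℕ}
    (hinj : Function.Injective fun x => u 2 ^ n * x * u 1 ^ m) :
    Function.Injective fun x => u 1 ^ m * x * u 2 ^ n := by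
  intro x y hxy
  have := congrArg σ hxy
  rw [hσ.map_u1_pow_mul_mul_u2_pow hq, hσ.map_u1_pow_mul_mul_u2_pow hq] at this
  exact hσ.injective (hinj (smul_right_injective R (zpow_ne_zero _ hq) this))

theorem map_minor₁ (hσ : IsDualBarInvolution q u σ) (h : StraighteningRelations q u)
    (hq : q ≠ 0) : σ (minor₁ q u) = q ^ (6 : ℤ) • minor₁ q u := by
  rw [minor₁, map_sub, map_smulₛₗ, ← zpow_natCast q 2, hσ.bar_zpow, pow_two, hσ.map_mul,
    hσ.map_mul, hσ.map_u1, hσ.map_u2, hσ.map_u3]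
  simp only [smul_mul_smul_comm, h.mul13]
  match_scalars <;> field

theorem map_minor₀ (hσ : IsDualBarInvolution q u σ) (h : StraighteningRelations q u)
    (hq : q ≠ 0) : σ (minor₀ q u) = q ^ (2 : ℤ) • minor₀ q u := by
  rw [minor₀, map_sub, map_smulₛₗ, ← zpow_natCast q 2, hσ.bar_zpow, pow_two, hσ.map_mul,
    hσ.map_mul, hσ.map_u1, hσ.map_u2, hσ.map_u0, mul_smul_comm]
  simp only [smul_mul_smul_comm, h.mul02]
  match_scalars <;> field

theorem map_torusMonomial (hσ : IsDualBarInvolution q u σ) (h : StraighteningRelations q u)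
    (hq : q ≠ 0) (a k l b : ℕ) :
    σ (torusMonomial q u a k l b) =
      q ^ (6 * a + 8 * k + 4 * l + 2 * b - 4 * a * l - 8 * k * l - 4 * a * b - 4 * k * b : ℤ) •
        torusMonomial q u a k l b := by
  have comm_u2 : QComm q 0 (u 2 ^ (2 * k)) (minor₁ q u ^ a) :=
    ((((h.minor₁_u2 hq).symm hq).pow_left hq (2 * k)).pow_right hq a).congr (by ring)
  have comm_u1 : QComm q _ (u 1 ^ (2 * l)) (minor₁ q u ^ a * u 2 ^ (2 * k)) :=
    (((h.u1_minor₁ hq).pow_right hq a).mul_right hq (QComm.pow_right hq h.mul12 (2 * k))).pow_left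
      hq (2 * l)
  have comm_minor₀ : QComm q _ (minor₀ q u ^ b)
      (minor₁ q u ^ a * u 2 ^ (2 * k) * u 1 ^ (2 * l)) :=
    ((((h.minor₀_minor₁ hq).pow_right hq a).mul_right hq
      ((h.minor₀_u2 hq).pow_right hq (2 * k))).mul_right hq
        (((h.u1_minor₀ hq).symm hq).pow_right hq (2 * l))).pow_left hq b
  rw [torusMonomial, hσ.map_mul_of_qComm hq (hσ.map_mul_of_qComm hq (hσ.map_mul_of_qComm hq
    (hσ.map_pow hq (hσ.map_minor₁ h hq) a) (hσ.map_pow hq hσ.map_u2 (2 * k)) comm_u2)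
    (hσ.map_pow hq hσ.map_u1 (2 * l)) comm_u1) (hσ.map_pow hq (hσ.map_minor₀ h hq) b) comm_minor₀]
  congr 2
  push_cast
  ring

theorem bar_minorCoeff (hσ : IsDualBarInvolution q u σ) (hq : q ≠ 0) (m n k l : ℕ) :
    bar (minorCoeff q m n k l) =
      q ^ (-2 * (k * (m + 1) + l * (n + 1) - 2 * k * l) : ℤ) * minorCoeff q m n k l := by
  rw [minorCoeff, _root_.map_mul, _root_.map_mul, map_quantumChoose, map_quantumChoose, hσ.bar_q,
    quantumChoose_inv, quantumChoose_inv, hσ.bar_zpow, ← mul_assoc (q ^ _) (q ^ _),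
    ← zpow_add₀ hq]
  ring_nf

end IsDualBarInvolution

theorem StraighteningRelations.u2_pow_mul_torusMonomial_mul_u1_pow
    (h : StraighteningRelations q u) (hq : q ≠ 0) (m n a k l b : ℕ) :
    u 2 ^ n * torusMonomial q u a k l b * u 1 ^ m =
      q ^ (m * (2 * a + 4 * k) + n * (2 * b + 4 * l) + 2 * m * n : ℤ) •
        (u 1 ^ m * torusMonomial q u a k l b * u 2 ^ n) := by
  have comm_u2 := (h.u2_torusMonomial hq a k l b).pow_left hq n
  have comm_u1 := (h.torusMonomial_u1 hq a k l b).pow_right hq m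
  have comm21 : QComm q (2 * m * n) (u 2 ^ n) (u 1 ^ m) :=
    (((QComm.symm hq h.mul12).pow_left hq n).pow_right hq m).congr (by ring)
  rw [mul_assoc, comm_u1, mul_smul_comm, comm21.mul_left_comm, comm_u2]
  simp only [mul_smul_comm, smul_smul, ← zpow_add₀ hq, mul_assoc]
  ring_nf

theorem IsDualBarInvolution.u2_pow_mul_map_minorSum_mul_u1_pow (hσ : IsDualBarInvolution q u σ)
    (h : StraighteningRelations q u) (hq : q ≠ 0) (m n : ℕ) :
    u 2 ^ n * σ (minorSum q u m n) * u 1 ^ m =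
      q ^ (6 * m + 2 * n + 2 * m ^ 2 + 2 * n ^ 2 - 2 * m * n : ℤ) •
        (u 1 ^ m * minorSum q u m n * u 2 ^ n) := by
  simp only [minorSum, map_sum, Finset.mul_sum, Finset.sum_mul, Finset.smul_sum]
  refine Finset.sum_congr rfl fun k hk => Finset.sum_congr rfl fun l hl => ?_
  rw [map_smulₛₗ, hσ.bar_minorCoeff hq, hσ.map_torusMonomial h hq]
  simp only [mul_smul_comm, smul_mul_assoc, h.u2_pow_mul_torusMonomial_mul_u1_pow hq, smul_smul]
  rw [mul_right_comm, mul_right_comm _ (minorCoeff ..), ← zpow_add₀ hq,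
    mul_right_comm _ (minorCoeff ..), ← zpow_add₀ hq,
    Nat.cast_sub (Finset.mem_range_succ_iff.1 hk), Nat.cast_sub (Finset.mem_range_succ_iff.1 hl)]
  ring_nf

theorem IsDualBarInvolution.map_eq_zpow_smul_of_conj_eq_minorSum
    (hσ : IsDualBarInvolution q u σ) (h : StraighteningRelations q u) (hq : q ≠ 0) {m n : ℕ}
    (hinj : Function.Injective fun x => u 2 ^ n * x * u 1 ^ m) {c : ℤ}
    (hx : u 2 ^ n * x * u 1 ^ m = q ^ c • minorSum q u m n) :
    σ x = q ^ (4 * m - 2 * n + 2 * m ^ 2 + 2 * n ^ 2 - 6 * m * n - 2 * c : ℤ) • x := by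
  have comm12 : QComm q (-2 * m * n) (u 1 ^ m) (u 2 ^ n) :=
    ((QComm.pow_left hq h.mul12 m).pow_right hq n).congr (by ring)
  have map_conj : q ^ (2 * m + 4 * n : ℤ) • (u 1 ^ m * σ x * u 2 ^ n) =
      q ^ (-c) • σ (minorSum q u m n) := by
    rw [← hσ.map_u2_pow_mul_mul_u1_pow hq, hx, map_smulₛₗ, hσ.bar_zpow]
  have minorSum_eq : minorSum q u m n = q ^ (-c) • (u 2 ^ n * x * u 1 ^ m) := by
    rw [hx, smul_smul, ← zpow_add₀ hq, neg_add_cancel, zpow_zero, one_smul]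
  refine hσ.u1_pow_mul_mul_u2_pow_injective hq hinj (hinj ?_)
  refine smul_right_injective R (zpow_ne_zero (2 * m + 4 * n : ℤ) hq) ?_
  calc q ^ (2 * m + 4 * n : ℤ) • (u 2 ^ n * (u 1 ^ m * σ x * u 2 ^ n) * u 1 ^ m)
      = q ^ (-c) • (u 2 ^ n * σ (minorSum q u m n) * u 1 ^ m) := by
        rw [← smul_mul_assoc, ← mul_smul_comm, map_conj, mul_smul_comm, smul_mul_assoc]
    _ = q ^ (6 * m + 2 * n + 2 * m ^ 2 + 2 * n ^ 2 - 2 * m * n - 2 * c : ℤ) •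
          ((u 1 ^ m * u 2 ^ n) * x * (u 1 ^ m * u 2 ^ n)) := by
        rw [hσ.u2_pow_mul_map_minorSum_mul_u1_pow h hq, minorSum_eq]
        simp only [mul_smul_comm, smul_mul_assoc, smul_smul, ← zpow_add₀ hq, mul_assoc]
        ring_nf
    _ = _ := by
        rw [comm12]
        simp only [mul_smul_comm, smul_mul_assoc, smul_smul, ← zpow_add₀ hq, mul_assoc]
        ring_nf

end DualBarInvolution

/-! ### Uniqueness of the dual canonical basis -/

section LusztigUniqueness

open Polynomial Submodule

variable {ι K M : Type*} [Field K] [AddCommGroup M] [Module K M] {bar : K →+* K}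
  {σ : M →ₛₗ[bar] M} {S : ι → Set ι} {μ : ι → ℕ} {ν : ι → K} {q : K}

theorem map_sub_smul_mem_span_of_eigenvectors {E B : ι → M} (hS : ∀ a, ∀ b ∈ S a, S b ⊆ S a)
    (hμ : ∀ a, ∀ b ∈ S a, μ b < μ a) (hBE : ∀ a, B a - E a ∈ span K (E '' S a))
    (hB : ∀ a, σ (B a) = ν a • B a) (a : ι) : σ (E a) - ν a • E a ∈ span K (E '' S a) := by
  induction hm : μ a using Nat.strong_induction_on generalizing a with
  | _ m ih =>
    have map_lower : ∀ y ∈ span K (E '' S a), σ y ∈ span K (E '' S a) := by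
      refine fun y hy => (span_le (p := (span K (E '' S a)).comap σ)).2 ?_ hy
      rintro _ ⟨b, hb, rfl⟩
      have lower := span_mono (Set.image_mono (hS a b hb)) (ih _ (hm ▸ hμ a b hb) b rfl)
      have diag := smul_mem _ (ν b) (subset_span (Set.mem_image_of_mem E hb))
      simpa using add_mem (s := span K (E '' S a)) lower diag
    have expand : σ (E a) - ν a • E a = ν a • (B a - E a) - σ (B a - E a) := by
      rw [map_sub, hB]
      module
    rw [expand]
    exact sub_mem (smul_mem _ _ (hBE a)) (map_lower _ (hBE a))

theorem eq_zero_of_map_eq_smul_of_triangular (E : Module.Basis ι K M)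
    (hμ : ∀ a, ∀ b ∈ S a, μ b < μ a) (hσE : ∀ a, σ (E a) - ν a • E a ∈ span K (E '' S a))
    {y : M} {c : K} (hc : c ≠ 0) (hν : ∀ b ∈ (E.repr y).support, ν b = c) (hy : σ y = c • y)
    (hbar : ∀ b, bar (E.repr y b) = E.repr y b → E.repr y b = 0) : y = 0 := by
  by_contra hy0
  obtain ⟨b, hb, hmax⟩ := Finset.exists_max_image (E.repr y).support μ
    (Finsupp.support_nonempty_iff.2 (by simpa using hy0))
  have coord_map : ∀ b' ∈ (E.repr y).support, E.repr (σ (E b')) b = c * E.repr (E b') b := by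
    intro b' hb'
    have notMem : b ∉ S b' := fun hbS => (hμ b' b hbS).not_ge (hmax b' hb')
    have coord_lower : E.repr (σ (E b') - ν b' • E b') b = 0 :=
      Finsupp.notMem_support_iff.1 fun hmem => notMem (E.mem_span_image.1 (hσE b') hmem)
    rwa [map_sub, map_smul, Finsupp.sub_apply, Finsupp.smul_apply, sub_eq_zero, hν b' hb']
      at coord_lower
  have bar_coord : bar (E.repr y b) * c = E.repr y b * c := by
    calc bar (E.repr y b) * c
        = ∑ b' ∈ (E.repr y).support, bar (E.repr y b') * (c * E.repr (E b') b) := by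
          rw [Finset.sum_eq_single_of_mem b hb fun b' _ hne => by simp [hne]]
          simp
      _ = E.repr (σ (Finsupp.linearCombination K E (E.repr y))) b := by
          rw [Finsupp.linearCombination_apply, Finsupp.sum]
          simp only [map_sum, map_smulₛₗ, Finsupp.finsetSum_apply, RingHom.id_apply,
            Finsupp.smul_apply, smul_eq_mul]
          exact Finset.sum_congr rfl fun b' hb' => by rw [coord_map b' hb']
      _ = E.repr y b * c := by
          rw [E.linearCombination_repr, hy, map_smul, Finsupp.smul_apply, smul_eq_mul, mul_comm]
  exact Finsupp.mem_support_iff.1 hb (hbar b (mul_right_cancel₀ hc bar_coord))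

theorem mul_eval₂_smul_mem_qLattice {E : ι → M} {T : Set ι} {b : ι} (hb : b ∈ T) (p : ℤ[X]) :
    (q * p.eval₂ (Int.castRingHom K) q) • E b ∈ qLattice q E 1 T := by
  rw [eval₂_eq_sum_range, Finset.mul_sum, Finset.sum_smul]
  refine sum_mem fun i _ => ?_
  have := zsmul_mem (zpow_smul_mem_qLattice (q := q) (E := E) (by lia : (1 : ℤ) ≤ i + 1) hb)
    (p.coeff i)
  convert this using 1
  rw [← Int.cast_smul_eq_zsmul K, smul_smul]
  congr 1
  rw [eq_intCast]
  norm_cast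
  ring

theorem ne_zero_of_transcendental (hq : Transcendental ℤ q) : q ≠ 0 := by
  rintro rfl
  exact hq isAlgebraic_zero

theorem not_isOfFinOrder_of_transcendental (hq : Transcendental ℤ q) : ¬IsOfFinOrder q := by
  rw [isOfFinOrder_iff_pow_eq_one]
  rintro ⟨n, hn, hqn⟩
  exact hq.pow hn (hqn ▸ isAlgebraic_one)

theorem exists_repr_eq_mul_aeval_of_mem_qLattice (E : Module.Basis ι K M) {T : Set ι} {x : M}
    (hx : x ∈ qLattice q E 1 T) (b : ι) : ∃ p : ℤ[X], E.repr x b = q * aeval q p := by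
  let qPoly : AddSubgroup K :=
    ((AddMonoidHom.mulLeft q).comp (aeval (R := ℤ) q).toRingHom.toAddMonoidHom).range
  suffices E.coord b x ∈ qPoly from this.imp fun p hp => hp.symm
  refine map_mem_of_mem_qLattice _ (fun z hz b' _ => ?_) hx
  obtain ⟨k, hk⟩ := Int.eq_ofNat_of_zero_le (sub_nonneg.2 hz)
  obtain rfl : z = (k + 1 : ℕ) := by lia
  rw [zpow_natCast]
  by_cases hbb : b' = b
  · exact ⟨X ^ k, by simp [hbb, pow_succ']⟩
  · exact ⟨0, by simp [hbb]⟩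

/-- A nonzero `c ∈ qℤ[q]` has positive degree at `q = ∞`, whereas `bar c ∈ q⁻¹ℤ[q⁻¹]`. -/
theorem eq_zero_of_bar_mul_aeval_eq (hq : Transcendental ℤ q) (hbar : bar q = q⁻¹) {p : ℤ[X]}
    (hp : bar (q * aeval q p) = q * aeval q p) : p = 0 := by
  by_contra hp0
  have hq0 : q ≠ 0 := ne_zero_of_transcendental hq
  have bar_aeval : bar (aeval q p) = aeval q p.reverse / q ^ p.natDegree := by
    let : Invertible q⁻¹ := invertibleOfNonzero (inv_ne_zero hq0)
    have := eval₂_reverse_mul_pow (algebraMap ℤ K) q⁻¹ p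
    rw [invOf_eq_inv, inv_inv, inv_pow, ← div_eq_mul_inv] at this
    rw [aeval_def, hom_eval₂, hbar, Subsingleton.elim (bar.comp (algebraMap ℤ K)), ← this,
      aeval_def]
  have reverse_eq : p.reverse = X ^ (p.natDegree + 2) * p := by
    refine transcendental_iff_injective.1 hq ?_
    rw [map_mul, hbar, bar_aeval] at hp
    rw [map_mul, map_pow, aeval_X]
    field_simp at hp
    linear_combination hp
  have := reverse_natDegree_le p
  rw [reverse_eq, natDegree_mul (pow_ne_zero _ X_ne_zero) hp0, natDegree_X_pow] at this
  lia

end LusztigUniqueness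

section DualCanonicalBasis

variable {K R : Type*} [Field K] [Ring R] [Algebra K R] {q : K} {u : Fin 4 → R} {bar : K →+* K}
  {σ : R →ₛₗ[bar] R} {B : Idx → R}

theorem IsDualBarInvolution.eq_of_hasLeadingTerm (hσ : IsDualBarInvolution q u σ)
    (h : StraighteningRelations q u) (hq : Transcendental ℤ q)
    (hgen : Algebra.adjoin K (Set.range u) = ⊤) (hli : LinearIndependent K (pbwMonomial u))
    (hlead : ∀ a, HasLeadingTerm q u a (B a)) (hB : ∀ a, σ (B a) = q ^ (-Nnum a) • B a)
    {a : Idx} {x : R} (hx : HasLeadingTerm q u a x) (hσx : σ x = q ^ (-Nnum a) • x) :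
    B a = x := by
  have hq0 := ne_zero_of_transcendental hq
  let E := h.dualPBWBasis hq0 hgen hli
  have hE : ⇑E = dualPBW q u := h.coe_dualPBWBasis hq0 hgen hli
  have hμ : ∀ a, ∀ b ∈ Sset a, b.1 + b.2.2.2 < a.1 + a.2.2.2 :=
    fun _ _ hb => add_lt_add_of_mem_Sset hb
  have triangular : ∀ a, σ (E a) - q ^ (-Nnum a) • E a ∈ Submodule.span K (E '' Sset a) := by
    rw [hE]
    exact map_sub_smul_mem_span_of_eigenvectors (fun _ _ hb => Sset_subset_Sset hb) hμ
      (fun a => mem_span_of_mem_qLattice (hlead a)) hB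
  have diff_mem : B a - x ∈ qLattice q E 1 (Sset a) := by
    rw [hE]
    simpa using sub_mem (hlead a) hx
  refine sub_eq_zero.1 <| eq_zero_of_map_eq_smul_of_triangular E hμ triangular
    (zpow_ne_zero (-Nnum a) hq0) (fun b hb => ?_) ?_ fun b hb => ?_
  · rw [Nnum_eq_of_mem_Sset (E.mem_span_image.1 (mem_span_of_mem_qLattice diff_mem) hb)]
  · rw [map_sub, hB, hσx, smul_sub]
  · obtain ⟨p, hp⟩ := exists_repr_eq_mul_aeval_of_mem_qLattice E diff_mem b
    rw [hp] at hb ⊢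
    rw [eq_zero_of_bar_mul_aeval_eq hq hσ.bar_q hb, map_zero, mul_zero]

theorem IsDualBarInvolution.eq_offDiagCandidate (hσ : IsDualBarInvolution q u σ)
    (h : StraighteningRelations q u) (hq : Transcendental ℤ q)
    (hgen : Algebra.adjoin K (Set.range u) = ⊤) (hli : LinearIndependent K (pbwMonomial u))
    (hlead : ∀ a, HasLeadingTerm q u a (B a)) (hB : ∀ a, σ (B a) = q ^ (-Nnum a) • B a) (n : ℕ) :
    B (n + 1, 0, 0, n) = offDiagCandidate q u n := by
  have hq0 := ne_zero_of_transcendental hq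
  refine hσ.eq_of_hasLeadingTerm h hq hgen hli hlead hB (h.hasLeadingTerm_candidates hq0 n).2.1 ?_
  rw [hσ.map_eq_zpow_smul_of_conj_eq_minorSum h hq0
    (h.u2_pow_mul_mul_u1_pow_injective hq0 hgen hli n (n + 1))
    (h.conj_candidates hq0 (not_isOfFinOrder_of_transcendental hq) n).2.1, Nnum]
  push_cast
  ring_nf

theorem minorCoeff_eq_zero {n k l : ℕ} (hk : k ≤ n + 1) (hl : l ≤ n) (hkl : n < k + l)
    (hne : ¬(k = n + 1 ∧ l = 0)) : minorCoeff q (n + 1) n k l = 0 := by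
  rw [minorCoeff, mul_eq_zero, mul_eq_zero]
  rcases hk.lt_or_eq with hk | rfl
  · exact .inr (.inl (quantumChoose_eq_zero (by lia) (by lia)))
  · exact .inr (.inr (quantumChoose_eq_zero (by lia) (by lia)))

theorem zpow_smul_minorSum_succ_eq_sum_filter (hq : q ≠ 0) (n : ℕ) :
    q ^ (n * (n - 2) : ℤ) • minorSum q u (n + 1) n =
      ∑ kl ∈ (Finset.range (n + 2) ×ˢ Finset.range (n + 2)).filter
          (fun kl => kl.1 + kl.2 ≤ n ∨ (kl.1 = n + 1 ∧ kl.2 = 0)),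
        (q ^ fexp n kl.1 kl.2 * quantumChoose q (n - kl.1) kl.2 *
            quantumChoose q (n + 1 - kl.2) kl.1) •
          torusMonomial q u (n + 1 - kl.1) kl.1 kl.2 (n - kl.2) := by
  have coeff_eq (k l : ℕ) : q ^ fexp n k l * quantumChoose q (n - k) l *
      quantumChoose q (n + 1 - l) k = q ^ (n * (n - 2) : ℤ) * minorCoeff q (n + 1) n k l := by
    rw [minorCoeff, ← mul_assoc, ← zpow_add₀ hq, fexp, ← mul_assoc]
    push_cast
    ring_nf
  simp only [minorSum, coeff_eq, mul_smul, ← Finset.smul_sum, ← Finset.sum_product']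
  congr 1
  refine (Finset.sum_subset ?_ ?_).symm
  · rintro ⟨k, l⟩ hkl
    simp only [Finset.mem_filter, Finset.mem_product, Finset.mem_range] at hkl ⊢
    lia
  · rintro ⟨k, l⟩ hkl hnot
    simp only [Finset.mem_filter, Finset.mem_product, Finset.mem_range] at hkl hnot
    rw [minorCoeff_eq_zero (by lia) (by lia) (by lia) (by lia), zero_smul]

theorem stmt17_general (h : StraighteningRelations q u) (hq : Transcendental ℤ q)
    (hgen : Algebra.adjoin K (Set.range u) = ⊤) (hli : LinearIndependent K (pbwMonomial u))
    (hσ : IsDualBarInvolution q u σ) (hlead : ∀ a, HasLeadingTerm q u a (B a))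
    (hB : ∀ a, σ (B a) = q ^ (-Nnum a) • B a) (n : ℕ) :
    u 2 ^ n * B (n + 1, 0, 0, n) * u 1 ^ (n + 1) =
      ∑ kl ∈ (Finset.range (n + 2) ×ˢ Finset.range (n + 2)).filter
          (fun kl => kl.1 + kl.2 ≤ n ∨ (kl.1 = n + 1 ∧ kl.2 = 0)),
        (q ^ fexp n kl.1 kl.2 * quantumChoose q (n - kl.1) kl.2 *
            quantumChoose q (n + 1 - kl.2) kl.1) •
          (minor₁ q u ^ (n + 1 - kl.1) * u 2 ^ (2 * kl.1) * u 1 ^ (2 * kl.2) *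
            minor₀ q u ^ (n - kl.2)) := by
  have hq0 := ne_zero_of_transcendental hq
  have hord := not_isOfFinOrder_of_transcendental hq
  rw [hσ.eq_offDiagCandidate h hq hgen hli hlead hB, (h.conj_candidates hq0 hord n).2.1]
  exact zpow_smul_minorSum_succ_eq_sum_filter hq0 n

end DualCanonicalBasis

/-! ### The subalgebra `S` of `U_q(𝔫)` -/

theorem transcendental_int_of_rat {K : Type*} [Field K] {_ : Algebra ℚ K} {q : K}
    (hq : Transcendental ℚ q) : Transcendental ℤ q :=
  hq.restrictScalars Int.cast_injective

/-- The instance is spelled out because `RatFunc ℚ` carries another `ℤ`-algebra structure,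
inherited from `ℚ[X]`. -/
theorem transcendental_qq : @Transcendental ℤ F _ _ (Ring.toIntAlgebra F) qq :=
  transcendental_int_of_rat RatFunc.transcendental_X

theorem serre_E1 : E1 ^ 3 * E2 - box3 • (E1 ^ 2 * E2 * E1)
    + box3 • (E1 * E2 * E1 ^ 2) - E2 * E1 ^ 3 = 0 := by
  have := RingQuot.mkAlgHom_rel F SerreRel.rel1
  simp only [map_sub, map_add, map_mul, map_pow, map_smul, map_zero] at this
  exact this

theorem serre_E2 : E2 ^ 3 * E1 - box3 • (E2 ^ 2 * E1 * E2)
    + box3 • (E2 * E1 * E2 ^ 2) - E1 * E2 ^ 3 = 0 := by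
  have := RingQuot.mkAlgHom_rel F SerreRel.rel2
  simp only [map_sub, map_add, map_mul, map_pow, map_smul, map_zero] at this
  exact this

/-- The generators `u₀, u₁, u₂, u₃` of `S` as a family. -/
def us : Fin 4 → Sgen := ![us0, us1, us2, us3]

theorem straighteningRelations_us : StraighteningRelations qq us := by
  have h := (straighteningRelations_of_serre (A := Aelt)
    (ne_zero_of_transcendental transcendental_qq)
    (not_isOfFinOrder_of_transcendental transcendental_qq) rfl serre_E1 serre_E2).scale
    (1 - qq⁻¹ ^ 2)⁻¹
  have coe_us (i : Fin 4) : (us i : U) = ((1 - qq⁻¹ ^ 2)⁻¹) ^ (2 * (i : ℕ)) •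
      ![E1, ⁅Aelt, E1⁆, ⁅Aelt, ⁅Aelt, E1⁆⁆, ⁅Aelt, ⁅Aelt, ⁅Aelt, E1⁆⁆⁆] i := by
    fin_cases i
    · exact (one_smul F u0).symm
    all_goals rfl
  rw [← funext coe_us] at h
  exact ⟨Subtype.ext h.mul01, Subtype.ext h.mul12, Subtype.ext h.mul23, Subtype.ext h.mul02,
    Subtype.ext h.mul13, Subtype.ext h.mul03⟩

theorem adjoin_range_us : Algebra.adjoin F (Set.range us) = ⊤ := by
  rw [← Algebra.adjoin_adjoin_coe_preimage (s := {u0, u1, u2, u3})]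
  congr 1
  ext x
  simp only [us, us0, us1, us2, us3, Matrix.range_cons, Matrix.range_empty, Set.union_empty,
    Set.union_singleton, Set.union_insert, Set.mem_insert_iff, Subtype.ext_iff, eq_comm,
    Set.mem_singleton_iff, Set.mem_preimage]
  tauto

theorem hasLeadingTerm_of_cond1 {B : Idx → Sgen} {a : Idx} (hB : cond1 B a) :
    HasLeadingTerm qq us a (B a) := by
  obtain ⟨φ, hφ, hBE⟩ := hB
  rw [HasLeadingTerm, show dualPBW qq us = Ee from rfl, hBE]
  exact sum_mem fun b hb => mul_eval₂_smul_mem_qLattice (hφ hb) (φ b)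

namespace SigmaHyp

variable {bar : F →+* F} {σ : Sgen → Sgen}

/-- `σ` as a semilinear map over the bar involution of the scalars. -/
def semilinearMap (hσ : SigmaHyp bar σ) : Sgen →ₛₗ[bar] Sgen where
  toFun := σ
  map_add' := hσ.2.2.1
  map_smul' := hσ.2.2.2.2.1

theorem isDualBarInvolution (hσ : SigmaHyp bar σ) :
    IsDualBarInvolution qq us hσ.semilinearMap := by
  obtain ⟨bar_qq, ⟨σ_inj, σ_surj⟩, -, σ_mul, -, σ_u0, σ_u1, σ_u2, σ_u3⟩ := id hσ
  have σ_one : σ 1 = 1 := by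
    obtain ⟨y, hy⟩ := σ_surj 1
    simpa [hy] using (σ_mul y 1).symm
  exact ⟨bar_qq, σ_inj, σ_one, σ_mul, σ_u0, mod_cast σ_u1, mod_cast σ_u2, mod_cast σ_u3⟩

end SigmaHyp

/-- For every natural number `n ≥ 0`,
`u₂ⁿ · B[n+1,0,0,n] · u₁^{n+1} = Σ_{(k,l)} q^{f(n,k,l)} [n−k; l][n+1−l; k]
p₁^{n+1−k} u₂^{2k} u₁^{2l} p₀^{n−l}`, where the sum runs over all pairs
`(k,l) ∈ ℕ²` with `k + l ≤ n` or `(k,l) = (n+1,0)`. -/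
theorem stmt17 (bar : F →+* F) (σ : Sgen → Sgen) (B : Idx → Sgen)
    (hPBW : LinearIndependent F mon) (hσ : SigmaHyp bar σ) (hB : DCB bar σ B) (n : ℕ) :
    us2 ^ n * B (n + 1, 0, 0, n) * us1 ^ (n + 1) =
      ∑ kl ∈ (Finset.range (n + 2) ×ˢ Finset.range (n + 2)).filter
          (fun kl => kl.1 + kl.2 ≤ n ∨ (kl.1 = n + 1 ∧ kl.2 = 0)),
        (qq ^ fexp n kl.1 kl.2 * qbinom ((n : ℤ) - kl.1) kl.2 *
            qbinom ((n : ℤ) + 1 - kl.2) kl.1) •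
          (ps1 ^ (n + 1 - kl.1) * us2 ^ (2 * kl.1) * us1 ^ (2 * kl.2) * ps0 ^ (n - kl.2)) :=
  stmt17_general straighteningRelations_us transcendental_qq adjoin_range_us hPBW
    hσ.isDualBarInvolution (fun a => hasLeadingTerm_of_cond1 (hB a).1) (fun a => (hB a).2) n
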